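/- arXiv:2306.09556 — 2 statements merged into one kernel-verified Lean document; each statement's English description precedes it below -/
import Mathlib

section
/- Let F = C((t)) and O = C[[t]]. For a dominant weight (λ, θ) with λ = (λ_1 ≤ ... ≤ λ_M) and θ = (θ_1 ≤ ... ≤ θ_{M+1}) integer sequences, let L_{(λ,θ)} ∈ GL_{M+1}(F) be the matrix with diagonal entries t^{λ_1+θ_1}, ..., t^{λ_M+θ_M}, t^{θ_{M+1}} and last row (t^{θ_1}, ..., t^{θ_M}, t^{θ_{M+1}}) (all other entries zero). If (λ, θ) ≠ (λ', θ') are two such dominant weights, then L_{(λ',θ')}^{-1} · GL_M(O) · L_{(λ,θ)} ∩ GL_{M+1}(O) = ∅, where GL_M(O) is embedded in GL_{M+1} as the upper-left block. -/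
/- Common setup: `F = ℂ((t))` the field of formal Laurent series, `O = ℂ[[t]]` its ring of
integers (elements with no negative coefficients), `tpow k = t^k`.  `InGLO A` says that the
square matrix `A` lies in `GL(O)`, i.e. both `A` and an inverse of `A` have entries in `O`. -/

noncomputable section

abbrev F : Type := LaurentSeries ℂ

/-- `t^k` for `k : ℤ`, where `t` is the uniformizer of `ℂ((t))`. -/
noncomputable def tpow (k : ℤ) : F := (HahnSeries.single (1 : ℤ) (1 : ℂ) : F) ^ k

/-- The ring of integers `O = ℂ[[t]] ⊆ ℂ((t))`. -/
def Oint : Set F := {f : F | ∀ m : ℤ, m < 0 → f.coeff m = 0}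

/-- `A ∈ GL_n(O)`. -/
def InGLO {n : ℕ} (A : Matrix (Fin n) (Fin n) F) : Prop :=
  ∃ B : Matrix (Fin n) (Fin n) F,
    (∀ i j, A i j ∈ Oint) ∧ (∀ i j, B i j ∈ Oint) ∧ A * B = 1 ∧ B * A = 1

/-- Block-diagonal embedding of an `M×M` matrix into the top-left corner of an `n×n`
matrix, with `1`'s on the rest of the diagonal. -/
noncomputable def embTop (M n : ℕ) (g : Matrix (Fin M) (Fin M) F) :
    Matrix (Fin n) (Fin n) F := fun i j =>
  if hi : (i : ℕ) < M then
    (if hj : (j : ℕ) < M then g ⟨i, hi⟩ ⟨j, hj⟩ else 0)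
  else (if (i : ℕ) = (j : ℕ) then 1 else 0)

/-- The matrix `L_{(λ,θ)} ∈ GL_{M+1}(F)`: diagonal entries `t^{λ_i+θ_i}` for `i < M`,
and last row `(t^{θ_1}, …, t^{θ_M}, t^{θ_{M+1}})`. -/
noncomputable def Lmat (M : ℕ) (lam : Fin M → ℤ) (th : Fin (M + 1) → ℤ) :
    Matrix (Fin (M + 1)) (Fin (M + 1)) F := fun i j =>
  if hi : (i : ℕ) < M then
    (if i = j then tpow (lam ⟨i, hi⟩ + th i) else 0)
  else tpow (th j)

/- Everything reduces to inequalities between valuations.  Suppose `g L = L' A` with `g ∈ GL_M(𝒪)`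
and `A ∈ GL_{M+1}(𝒪)`, where `L` has diagonal entries `b i * a i` above the last row `a`.
Valuations are written multiplicatively, so non-decreasing exponents have antitone valuations.

The top-left block gives `g i j * (b j * a j) = b' i * a' i * A i j`.  A matrix that is invertible
over a local ring has, for each `k`, a unit entry at some `(i, j)` with `j ≤ k ≤ i`; there the
equation and the ordering of the weights give `v (b k * a k) ≤ v (b' k * a' k)`.  The last row
gives `a k = ∑ i, a' i * A i k`, and each summand has valuation at most `v (a' k)`: for `k ≤ i` by
the ordering of `a'`, and for `i < k` because the top-left block gives
`v (b' i * (a' i * A i k)) ≤ v (b' k * a' k) ≤ v (b' i * a' k)`, from which `b' i` cancels.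
Exchanging the roles of `L` and `L'` (with `g⁻¹` and `A⁻¹`) turns the inequalities into
equalities. -/

open Matrix

section LocalRing

variable {n R : Type*} [LinearOrder n] [CommRing R]

theorem exists_le_and_le_perm_apply [Finite n] (σ : Equiv.Perm n) (k : n) : ∃ j ≤ k, k ≤ σ j := by
  by_contra! hσ
  have hmaps : Set.MapsTo σ (Set.Iic k) (Set.Iic k) := fun j hj => (hσ j hj).le
  have hbij : Set.BijOn σ (Set.Iic k) (Set.Iic k) :=
    ((Set.toFinite _).injOn_iff_bijOn_of_mapsTo hmaps).1 σ.injective.injOn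
  obtain ⟨j, hj, hjk⟩ := hbij.surjOn (Set.self_mem_Iic (a := k))
  exact (hσ j hj).ne hjk

theorem det_mem_of_forall_le_mem [Fintype n] {I : Ideal R} {N : Matrix n n R} (k : n)
    (hN : ∀ i j, k ≤ i → j ≤ k → N i j ∈ I) : N.det ∈ I := by
  rw [det_apply]
  refine I.sum_mem fun σ _ => zsmul_mem ?_ _
  obtain ⟨j, hjk, hkj⟩ := exists_le_and_le_perm_apply σ k
  exact I.prod_mem (Finset.mem_univ j) (hN _ _ hkj hjk)

theorem exists_isUnit_apply_of_le_of_le [Fintype n] [IsLocalRing R] (g : GL n R) (k : n) :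
    ∃ i j, k ≤ i ∧ j ≤ k ∧ IsUnit (g i j) := by
  by_contra! hg
  have hdet : g.val.det ∈ IsLocalRing.maximalIdeal R :=
    det_mem_of_forall_le_mem k fun i j hi hj => (IsLocalRing.mem_maximalIdeal _).2 (hg i j hi hj)
  exact (IsLocalRing.mem_maximalIdeal _).1 hdet g.det.isUnit

end LocalRing

section WeightMatrix

variable {R : Type*} [Semiring R] {M : ℕ}

/-- The block-diagonal embedding `g ↦ diag(g, 1)` of `M × M` matrices into the matrices of size
`M + 1`, as a monoid homomorphism so that it carries `GL_M` into `GL_{M+1}`. -/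
def embedTopLeft : Matrix (Fin M) (Fin M) R →* Matrix (Fin (M + 1)) (Fin (M + 1)) R where
  toFun g := of (Fin.snoc (fun i => Fin.snoc (g i) 0) (Pi.single (Fin.last M) 1))
  map_one' := by
    ext i j
    cases i using Fin.lastCases <;> cases j using Fin.lastCases <;>
      simp [one_apply, eq_comm]
  map_mul' g h := by
    ext i j
    cases i using Fin.lastCases <;> cases j using Fin.lastCases <;>
      simp [mul_apply, Fin.sum_univ_castSucc, Pi.single_apply]

/-- The matrix with diagonal entries `b i * a i` above the last row `a`. It is the matrix
`L_{(λ,θ)}` when `b i = t ^ λ_i` and `a i = t ^ θ_i`; the entries are kept arbitrary because only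
their valuations matter. -/
def weightMatrix (b : Fin M → R) (a : Fin (M + 1) → R) :
    Matrix (Fin (M + 1)) (Fin (M + 1)) R :=
  of (Fin.snoc (fun i => Pi.single i.castSucc (b i * a i.castSucc)) a)

variable (g : Matrix (Fin M) (Fin M) R) (A : Matrix (Fin (M + 1)) (Fin (M + 1)) R)
  (b : Fin M → R) (a : Fin (M + 1) → R)

theorem embedTopLeft_mul_weightMatrix_castSucc_castSucc (i j : Fin M) :
    (embedTopLeft g * weightMatrix b a) i.castSucc j.castSucc =
      g i j * (b j * a j.castSucc) := by
  simp [embedTopLeft, weightMatrix, mul_apply, Fin.sum_univ_castSucc, Pi.single_apply]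

theorem embedTopLeft_mul_weightMatrix_castSucc_last (i : Fin M) :
    (embedTopLeft g * weightMatrix b a) i.castSucc (Fin.last M) = 0 := by
  simp [embedTopLeft, weightMatrix, mul_apply, Fin.sum_univ_castSucc]

theorem embedTopLeft_mul_weightMatrix_last (j : Fin (M + 1)) :
    (embedTopLeft g * weightMatrix b a) (Fin.last M) j = a j := by
  simp [embedTopLeft, weightMatrix, mul_apply, Pi.single_apply]

theorem weightMatrix_mul_castSucc (i : Fin M) (j : Fin (M + 1)) :
    (weightMatrix b a * A) i.castSucc j = b i * a i.castSucc * A i.castSucc j := by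
  simp [weightMatrix, mul_apply, Pi.single_apply]

theorem weightMatrix_mul_last (j : Fin (M + 1)) :
    (weightMatrix b a * A) (Fin.last M) j = ∑ i, a i * A i j := by
  simp [weightMatrix, mul_apply]

end WeightMatrix

theorem embedTopLeft_inv_mul_eq_mul_inv {R S : Type*} [CommRing R] [CommRing S] (f : R →+* S)
    {M : ℕ} {g : GL (Fin M) R} {A : GL (Fin (M + 1)) R}
    {L L' : Matrix (Fin (M + 1)) (Fin (M + 1)) S}
    (h : embedTopLeft (g.val.map f) * L = L' * A.val.map f) :
    embedTopLeft (g⁻¹.val.map f) * L' = L * A⁻¹.val.map f := by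
  let G := Units.map embedTopLeft (GeneralLinearGroup.map f g)
  let H := GeneralLinearGroup.map f A
  change G.val * L = L' * H.val at h
  change G⁻¹.val * L' = L * H⁻¹.val
  rw [Units.inv_mul_eq_iff_eq_mul, ← mul_assoc, Units.eq_mul_inv_iff_mul_eq, h]

section Valued

variable {K Γ₀ : Type*} [Field K] [LinearOrderedCommGroupWithZero Γ₀] {v : Valuation K Γ₀}

theorem valuation_diagonal_le {n : Type*} [Fintype n] [LinearOrder n] {d d' : n → K}
    (hd : Antitone (v ∘ d)) (hd' : Antitone (v ∘ d'))
    {g : GL n v.valuationSubring} {A : Matrix n n v.valuationSubring}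
    (h : ∀ i j, (g i j : K) * d j = d' i * A i j) (k : n) : v (d k) ≤ v (d' k) := by
  obtain ⟨i, j, hki, hjk, hunit⟩ := exists_isUnit_apply_of_le_of_le g k
  have hg : v (g i j) = 1 :=
    (Valuation.integer.integers v).isUnit_iff_valuation_eq_one.1 hunit
  calc v (d k) ≤ v (d j) := hd hjk
    _ = v (g i j * d j) := by rw [map_mul, hg, one_mul]
    _ = v (d' i) * v (A i j) := by rw [h, map_mul]
    _ ≤ v (d' i) := mul_le_of_le_one_right' (A i j).2
    _ ≤ v (d' k) := hd' hki

variable {M : ℕ} {b b' : Fin M → K} {a a' : Fin (M + 1) → K}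

theorem antitone_valuation_mul_castSucc (hb : Antitone (v ∘ b)) (ha : Antitone (v ∘ a)) :
    Antitone (v ∘ fun i => b i * a i.castSucc) := fun i j hij => by
  simpa using mul_le_mul' (hb hij) (ha (Fin.castSucc_le_castSucc_iff.2 hij))

theorem valuation_mul_castSucc_le (hb : Antitone (v ∘ b)) (ha : Antitone (v ∘ a))
    (hb' : Antitone (v ∘ b')) (ha' : Antitone (v ∘ a'))
    {g : GL (Fin M) v.valuationSubring}
    {A : Matrix (Fin (M + 1)) (Fin (M + 1)) v.valuationSubring}
    (h : embedTopLeft (g.val.map v.valuationSubring.subtype) * weightMatrix b a =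
      weightMatrix b' a' * A.map v.valuationSubring.subtype) (k : Fin M) :
    v (b k * a k.castSucc) ≤ v (b' k * a' k.castSucc) := by
  refine valuation_diagonal_le (antitone_valuation_mul_castSucc hb ha)
    (antitone_valuation_mul_castSucc hb' ha') (g := g)
    (A := A.submatrix Fin.castSucc Fin.castSucc) (fun i j => ?_) k
  have hij := congr_fun₂ h i.castSucc j.castSucc
  rwa [embedTopLeft_mul_weightMatrix_castSucc_castSucc, weightMatrix_mul_castSucc] at hij

section LastRow

variable {g : Matrix (Fin M) (Fin M) v.valuationSubring}
  {A : Matrix (Fin (M + 1)) (Fin (M + 1)) v.valuationSubring}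

theorem valuation_mul_apply_le_of_lt (hb' : Antitone (v ∘ b')) (hb'0 : ∀ i, b' i ≠ 0)
    (hba : ∀ i, v (b i * a i.castSucc) ≤ v (b' i * a' i.castSucc))
    (h : embedTopLeft (g.map v.valuationSubring.subtype) * weightMatrix b a =
      weightMatrix b' a' * A.map v.valuationSubring.subtype)
    {i : Fin M} {k : Fin (M + 1)} (hik : i.castSucc < k) :
    v (a' i.castSucc * A i.castSucc k) ≤ v (a' k) := by
  have hik_entry := congr_fun₂ h i.castSucc k
  rw [weightMatrix_mul_castSucc, map_apply, ValuationSubring.subtype_apply, mul_assoc] at hik_entry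
  refine le_of_mul_le_mul_left ?_ (v.pos_iff.2 (hb'0 i))
  rw [← map_mul]
  cases k using Fin.lastCases with
  | last =>
    rw [embedTopLeft_mul_weightMatrix_castSucc_last] at hik_entry
    rw [← hik_entry, map_zero]
    exact zero_le
  | cast k =>
    rw [embedTopLeft_mul_weightMatrix_castSucc_castSucc] at hik_entry
    calc v (b' i * (a' i.castSucc * A i.castSucc k.castSucc))
        = v (g i k) * v (b k * a k.castSucc) := by rw [← map_mul]; exact congrArg v hik_entry.symm
      _ ≤ v (b k * a k.castSucc) := mul_le_of_le_one_left' (g i k).2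
      _ ≤ v (b' k * a' k.castSucc) := hba k
      _ = v (b' k) * v (a' k.castSucc) := map_mul ..
      _ ≤ v (b' i) * v (a' k.castSucc) := by
        gcongr
        exact hb' (Fin.castSucc_lt_castSucc_iff.1 hik).le

theorem valuation_lastRow_le (hb' : Antitone (v ∘ b')) (ha' : Antitone (v ∘ a'))
    (hb'0 : ∀ i, b' i ≠ 0) (hba : ∀ i, v (b i * a i.castSucc) ≤ v (b' i * a' i.castSucc))
    (h : embedTopLeft (g.map v.valuationSubring.subtype) * weightMatrix b a =
      weightMatrix b' a' * A.map v.valuationSubring.subtype)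
    (k : Fin (M + 1)) : v (a k) ≤ v (a' k) := by
  have hk := congr_fun₂ h (Fin.last M) k
  rw [embedTopLeft_mul_weightMatrix_last, weightMatrix_mul_last] at hk
  rw [hk]
  refine v.map_sum_le fun i _ => ?_
  rcases le_or_gt k i with hki | hik
  · calc v (a' i * A i k) = v (a' i) * v (A i k) := map_mul ..
      _ ≤ v (a' i) := mul_le_of_le_one_right' (A i k).2
      _ ≤ v (a' k) := ha' hki
  · obtain ⟨i, rfl⟩ := Fin.exists_castSucc_eq.2 (Fin.ne_last_of_lt hik)
    exact valuation_mul_apply_le_of_lt hb' hb'0 hba h hik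

end LastRow

theorem stmt0_general (hb : Antitone (v ∘ b)) (ha : Antitone (v ∘ a))
    (hb' : Antitone (v ∘ b')) (ha' : Antitone (v ∘ a')) (hba0 : ∀ i, b i * a i.castSucc ≠ 0)
    (hne : (v ∘ b, v ∘ a) ≠ (v ∘ b', v ∘ a'))
    (g : GL (Fin M) v.valuationSubring) (A : GL (Fin (M + 1)) v.valuationSubring) :
    embedTopLeft (g.val.map v.valuationSubring.subtype) * weightMatrix b a ≠
      weightMatrix b' a' * A.val.map v.valuationSubring.subtype := by
  intro h
  have h_inv := embedTopLeft_inv_mul_eq_mul_inv _ h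
  have hba (i : Fin M) : v (b i * a i.castSucc) = v (b' i * a' i.castSucc) :=
    le_antisymm (valuation_mul_castSucc_le hb ha hb' ha' h i)
      (valuation_mul_castSucc_le hb' ha' hb ha h_inv i)
  have hba'0 (i : Fin M) : b' i * a' i.castSucc ≠ 0 := by
    rw [← v.ne_zero_iff, ← hba, v.ne_zero_iff]
    exact hba0 i
  have ha_eq : v ∘ a = v ∘ a' := funext fun k =>
    le_antisymm
      (valuation_lastRow_le hb' ha' (fun i => left_ne_zero_of_mul (hba'0 i))
        (fun i => (hba i).le) h k)
      (valuation_lastRow_le hb ha (fun i => left_ne_zero_of_mul (hba0 i))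
        (fun i => (hba i).ge) h_inv k)
  have hb_eq : v ∘ b = v ∘ b' := funext fun i => by
    have hi := hba i
    have hai : v (a i.castSucc) = v (a' i.castSucc) := congr_fun ha_eq i.castSucc
    rw [map_mul, map_mul, ← hai] at hi
    exact mul_right_cancel₀ (v.ne_zero_iff.2 (right_ne_zero_of_mul (hba0 i))) hi
  exact hne (Prod.ext hb_eq ha_eq)

end Valued

section LaurentSeries

open WithZero

theorem mem_Oint_iff_mem_valuationSubring {f : F} :
    f ∈ Oint ↔ f ∈ (Valued.v : Valuation F ℤᵐ⁰).valuationSubring :=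
  (LaurentSeries.valuation_le_iff_coeff_lt_eq_zero ℂ (D := 0)).symm

theorem InGLO.exists_generalLinearGroup {n : ℕ} {A : Matrix (Fin n) (Fin n) F} (hA : InGLO A) :
    ∃ g : GL (Fin n) (Valued.v : Valuation F ℤᵐ⁰).valuationSubring,
      g.val.map (Valued.v : Valuation F ℤᵐ⁰).valuationSubring.subtype = A := by
  obtain ⟨B, hAO, hBO, hAB, hBA⟩ := hA
  let 𝒪 := (Valued.v : Valuation F ℤᵐ⁰).valuationSubring
  let A' : Matrix (Fin n) (Fin n) 𝒪 :=
    of fun i j => ⟨A i j, mem_Oint_iff_mem_valuationSubring.1 (hAO i j)⟩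
  let B' : Matrix (Fin n) (Fin n) 𝒪 :=
    of fun i j => ⟨B i j, mem_Oint_iff_mem_valuationSubring.1 (hBO i j)⟩
  have hinj : Function.Injective (𝒪.subtype.mapMatrix (m := Fin n)) :=
    Matrix.map_injective Subtype.val_injective
  refine ⟨⟨A', B', hinj ?_, hinj ?_⟩, rfl⟩
  · rw [map_mul, map_one]
    exact hAB
  · rw [map_mul, map_one]
    exact hBA

theorem strictAnti_valuation_tpow : StrictAnti (Valued.v ∘ tpow : ℤ → ℤᵐ⁰) := fun k l hkl => by
  have hval (m : ℤ) : (Valued.v (tpow m) : ℤᵐ⁰) = exp (-m) := by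
    rw [tpow, ← RatFunc.single_zpow, LaurentSeries.valuation_single_zpow]
  rw [Function.comp_apply, Function.comp_apply, hval, hval, exp_lt_exp]
  exact neg_lt_neg hkl

theorem tpow_ne_zero (k : ℤ) : tpow k ≠ 0 :=
  zpow_ne_zero k (HahnSeries.single_ne_zero one_ne_zero)

theorem tpow_add (k l : ℤ) : tpow (k + l) = tpow k * tpow l :=
  zpow_add₀ (HahnSeries.single_ne_zero one_ne_zero) k l

variable {M : ℕ}

theorem embTop_succ_eq_embedTopLeft (g : Matrix (Fin M) (Fin M) F) :
    embTop M (M + 1) g = embedTopLeft g := by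
  ext1 i j
  cases i using Fin.lastCases <;> cases j using Fin.lastCases <;>
    simp [embTop, embedTopLeft, (Fin.is_lt _).ne']

theorem Lmat_eq_weightMatrix (lam : Fin M → ℤ) (th : Fin (M + 1) → ℤ) :
    Lmat M lam th = weightMatrix (tpow ∘ lam) (tpow ∘ th) := by
  ext1 i j
  cases i using Fin.lastCases <;>
    simp [Lmat, weightMatrix, tpow_add, Pi.single_apply, eq_comm]

end LaurentSeries

/-- If `(λ,θ) ≠ (λ',θ')` are two dominant weights of length `(M, M+1)`,
then `L_{(λ',θ')}⁻¹ · GL_M(O) · L_{(λ,θ)} ∩ GL_{M+1}(O) = ∅`; equivalently, for every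
`g ∈ GL_M(O)` (embedded block-diagonally) and every `A ∈ GL_{M+1}(O)` one has
`g · L_{(λ,θ)} ≠ L_{(λ',θ')} · A`. -/
theorem stmt0 (M : ℕ) (lam lam' : Fin M → ℤ) (th th' : Fin (M + 1) → ℤ)
    (hlam : Monotone lam) (hth : Monotone th)
    (hlam' : Monotone lam') (hth' : Monotone th')
    (hne : (lam, th) ≠ (lam', th'))
    (g : Matrix (Fin M) (Fin M) F) (A : Matrix (Fin (M + 1)) (Fin (M + 1)) F)
    (hg : InGLO g) (hA : InGLO A) :
    embTop M (M + 1) g * Lmat M lam th ≠ Lmat M lam' th' * A := by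
  obtain ⟨g, rfl⟩ := hg.exists_generalLinearGroup
  obtain ⟨A, rfl⟩ := hA.exists_generalLinearGroup
  have hv := strictAnti_valuation_tpow
  rw [embTop_succ_eq_embedTopLeft, Lmat_eq_weightMatrix, Lmat_eq_weightMatrix]
  exact stmt0_general (hv.antitone.comp_monotone hlam) (hv.antitone.comp_monotone hth)
    (hv.antitone.comp_monotone hlam') (hv.antitone.comp_monotone hth')
    (fun _ => mul_ne_zero (tpow_ne_zero _) (tpow_ne_zero _))
    (fun h => hne (hv.injective.comp_left.prodMap hv.injective.comp_left h)) g A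
end
end

section
/- Let F = C((t)), O = C[[t]], M < N. Every GL_M(O) ⋉ U⁻_{M,N}(F)-orbit on the affine Grassmannian Gr_N = GL_N(F)/GL_N(O) contains a representative of the form L_{(λ,(θ,θ'))}, the block matrix with upper-left (M+1)×(M+1) block equal to L_{(λ,θ)} (diagonal t^{λ_i+θ_i}, last row t^{θ_i}) and lower-right diagonal block diag(t^{θ'_1}, ..., t^{θ'_{N-M-1}}), where (λ,θ) is a dominant weight of length (M, M+1) and θ' is an arbitrary integer sequence of length N-M-1; moreover this representative is unique. -/
/- Common setup: `F = ℂ((t))` the field of formal Laurent series, `O = ℂ[[t]]` its ring of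
integers (elements with no negative coefficients), `tpow k = t^k`.  `InGLO A` says that the
square matrix `A` lies in `GL(O)`, i.e. both `A` and an inverse of `A` have entries in `O`. -/

noncomputable section

/-- `u ∈ U⁻_{M,N}(F)`, the unipotent radical of the negative parabolic of type
`(M+1,1,…,1)` in `GL_N`: identity diagonal, and (0-based) the only nonzero off-diagonal
entries are in rows `i ≥ M+1` and columns `j < i`. -/
def InUminus (M : ℕ) {n : ℕ} (u : Matrix (Fin n) (Fin n) F) : Prop :=
  (∀ i, u i i = 1) ∧
  ∀ i j : Fin n, i ≠ j → ((i : ℕ) ≤ M ∨ (i : ℕ) ≤ (j : ℕ)) → u i j = 0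

/-- The representative `L_{(λ,(θ,θ'))} ∈ GL_N(F)`, `N = M+1+K`: the upper-left
`(M+1)×(M+1)` block has diagonal `t^{λ_i+θ_i}` (`i ≤ M`) and last row
`(t^{θ_1},…,t^{θ_{M+1}})`, and the lower-right block is `diag(t^{θ'_1},…,t^{θ'_K})`. -/
noncomputable def LmatN (M K : ℕ) (lam : Fin M → ℤ) (th : Fin (M + 1) → ℤ)
    (th' : Fin K → ℤ) : Matrix (Fin (M + 1 + K)) (Fin (M + 1 + K)) F := fun i j =>
  if hi : (i : ℕ) < M then
    (if (i : ℕ) = (j : ℕ) then tpow (lam ⟨i, hi⟩ + th ⟨i, by omega⟩) else 0)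
  else if hi2 : (i : ℕ) = M then
    (if hj : (j : ℕ) < M + 1 then tpow (th ⟨j, hj⟩) else 0)
  else if (i : ℕ) = (j : ℕ) then
    tpow (th' ⟨(i : ℕ) - (M + 1), by have := i.isLt; omega⟩)
  else 0

/-!
Right multiplication by `GL(R)` turns the last column of an invertible matrix into
`(0, …, 0, π ^ k)`. Alternating this step with clearing the last row by `U⁻` isolates the
top-left block `m ⊕ 1` from a diagonal block, and the same column step splits the former as
`[[B, 0], [x, π ^ b]]`.
Smith normal form makes `B` diagonal with increasing exponents `a`. Conjugating a transvection by
`diag(π ^ a)` keeps it in `GL(R)` once its `(i, j)` entry is divisible by `π ^ max 0 (a j - a i)`,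
so the exponents `k` of the last row can be replaced by `θ i = min_j (max 0 (a i - a j) + k j)`;
the bounds `θ i ≤ max 0 (a i - a j) + θ j` then say precisely that `θ` and `λ = a - θ` are monotone.

For uniqueness, two normal forms in one orbit differ by integral matrices. If an exponent of the
Smith form dropped, a connecting matrix of `GL(R)` would acquire modulo `ϖ` a block of zeros too
large for its determinant to be a unit, so `a` and `θ'` are determined. The last row is then
transformed by a matrix `γ` such that `γ` and `π ^ a * γ * π ^ (-a)` are both integral, and
monotonicity of `θ` and `a - θ` gives `π ^ (θ i - θ j) * γ i j ∈ R`, so no exponent of that row can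
decrease.
-/

open Matrix

section BlockMatrices

variable {m n R S : Type*} [Fintype m] [DecidableEq m] [Fintype n] [DecidableEq n]
  [CommRing R] [CommRing S]

/-- The block lower triangular matrix `[[A, 0], [X, D]]` as an element of `GL`. -/
def lowerBlock (A : GL m R) (X : Matrix n m R) (D : GL n R) : GL (m ⊕ n) R where
  val := fromBlocks A 0 X D
  inv := fromBlocks A.inv 0 (-(D.inv * X * A.inv)) D.inv
  val_inv := by simp [fromBlocks_multiply, ← Matrix.mul_assoc]
  inv_val := by simp [fromBlocks_multiply, Matrix.mul_assoc]

@[simp]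
theorem coe_lowerBlock (A : GL m R) (X : Matrix n m R) (D : GL n R) :
    (lowerBlock A X D : Matrix (m ⊕ n) (m ⊕ n) R) = fromBlocks A 0 X D :=
  rfl

theorem lowerBlock_mul (A A' : GL m R) (X X' : Matrix n m R) (D D' : GL n R) :
    lowerBlock A X D * lowerBlock A' X' D' =
      lowerBlock (A * A') (X * A'.val + D.val * X') (D * D') :=
  Units.ext <| by simp [fromBlocks_multiply]

theorem lowerBlock_inv (A : GL m R) (X : Matrix n m R) (D : GL n R) :
    (lowerBlock A X D)⁻¹ = lowerBlock A⁻¹ (-(D⁻¹.val * X * A⁻¹.val)) D⁻¹ :=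
  Units.ext rfl

theorem lowerBlock_one : lowerBlock (1 : GL m R) 0 (1 : GL n R) = 1 :=
  Units.ext <| by simp

theorem lowerBlock_zero_one_mul (A A' : GL m R) :
    lowerBlock A 0 (1 : GL n R) * lowerBlock A' 0 1 = lowerBlock (A * A') 0 1 := by
  simp [lowerBlock_mul]

theorem lowerBlock_zero_one_inv (A : GL m R) :
    (lowerBlock A 0 (1 : GL n R))⁻¹ = lowerBlock A⁻¹ 0 1 := by
  simp [lowerBlock_inv]

theorem map_lowerBlock (f : R →+* S) (A : GL m R) (X : Matrix n m R) (D : GL n R) :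
    GeneralLinearGroup.map f (lowerBlock A X D) =
      lowerBlock (GeneralLinearGroup.map f A) (X.map f) (GeneralLinearGroup.map f D) :=
  Units.ext <| by simp [GeneralLinearGroup.map, fromBlocks_map]

theorem exists_eq_lowerBlock {A : GL (m ⊕ n) R} (hA : A.val.toBlocks₁₂ = 0) :
    ∃ A₁ X A₂, A = lowerBlock A₁ X A₂ := by
  have hblocks : A.val = fromBlocks A.val.toBlocks₁₁ 0 A.val.toBlocks₂₁ A.val.toBlocks₂₂ := by
    rw [← hA, fromBlocks_toBlocks]
  obtain ⟨⟨A₁, h₁⟩, A₂, h₂⟩ := isUnit_fromBlocks_zero₁₂.1 (hblocks ▸ A.isUnit)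
  exact ⟨A₁, _, A₂, Units.ext <| by rw [hblocks, coe_lowerBlock, h₁, h₂]⟩

/-- The diagonal torus of `GL n R`, parametrised by its diagonal entries. -/
def diagonalGL : (n → Rˣ) →* GL n R :=
  (Units.map (diagonalRingHom n R : (n → R) →* Matrix n n R)).comp
    MulEquiv.piUnits.symm.toMonoidHom

@[simp]
theorem coe_diagonalGL (d : n → Rˣ) :
    (diagonalGL d : Matrix n n R) = diagonal fun i => (d i : R) :=
  rfl

theorem map_diagonalGL (f : R →+* S) (d : n → Rˣ) :
    GeneralLinearGroup.map f (diagonalGL d) = diagonalGL fun i => Units.map f (d i) :=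
  Units.ext <| by simp [GeneralLinearGroup.map, diagonal_map]

theorem diagonalGL_inv_mul_mul_diagonalGL_apply (d d' : n → Rˣ) (A : GL n R) (i j : n) :
    ((diagonalGL d)⁻¹ * A * diagonalGL d').val i j = ((d i)⁻¹ : Rˣ) * A.val i j * d' j := by
  rw [← map_inv, Units.val_mul, Units.val_mul, coe_diagonalGL, coe_diagonalGL, mul_diagonal,
    diagonal_mul]
  rfl

/-- Relabelling rows and columns along `e`, as an isomorphism of general linear groups. -/
def reindexGL (e : m ≃ n) : GL m R ≃* GL n R :=
  Units.mapEquiv (reindexRingEquiv R e).toMulEquiv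

@[simp]
theorem coe_reindexGL (e : m ≃ n) (A : GL m R) :
    (reindexGL e A : Matrix n n R) = (A : Matrix m m R).submatrix e.symm e.symm :=
  rfl

theorem map_reindexGL (f : R →+* S) (e : m ≃ n) (A : GL m R) :
    GeneralLinearGroup.map f (reindexGL e A) = reindexGL e (GeneralLinearGroup.map f A) :=
  Units.ext rfl

theorem reindexGL_diagonalGL (e : m ≃ n) (d : m → Rˣ) :
    reindexGL e (diagonalGL d) = diagonalGL (d ∘ e.symm) :=
  Units.ext <| by simp [Function.comp_def]

theorem lowerBlock_diagonalGL (d : m → Rˣ) (d' : n → Rˣ) :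
    lowerBlock (diagonalGL d) 0 (diagonalGL d') = diagonalGL (Sum.elim d d') :=
  Units.ext <| by
    simp only [coe_lowerBlock, coe_diagonalGL, fromBlocks_diagonal]
    congr 1
    ext (i | i) <;> rfl

theorem reindexGL_sumAssoc_lowerBlock {l p : Type*} [Fintype l] [DecidableEq l] [Fintype p]
    [DecidableEq p] (e : m ⊕ n ≃ p) (A : GL l R) (X : Matrix m l R) (D : GL m R)
    (Y : Matrix n (l ⊕ m) R) (E : GL n R) :
    reindexGL ((Equiv.sumAssoc l m n).trans ((Equiv.refl l).sumCongr e))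
        (lowerBlock (lowerBlock A X D) Y E) =
      lowerBlock A ((fromRows X Y.toCols₁).submatrix e.symm id)
        (reindexGL e (lowerBlock D Y.toCols₂ E)) := by
  ext i j
  obtain ⟨i, rfl⟩ := ((Equiv.refl l).sumCongr e).surjective i
  obtain ⟨j, rfl⟩ := ((Equiv.refl l).sumCongr e).surjective j
  rcases i with i | i | i <;> rcases j with j | j | j <;> simp

theorem reindexGL_sumAssoc_lowerBlock_diagonalGL {l p : Type*} [Fintype l] [DecidableEq l]
    [Fintype p] [DecidableEq p] (e : m ⊕ n ≃ p) (A : GL l R) (d : m → Rˣ) (d' : n → Rˣ) :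
    reindexGL ((Equiv.sumAssoc l m n).trans ((Equiv.refl l).sumCongr e))
        (lowerBlock (lowerBlock A 0 (diagonalGL d)) 0 (diagonalGL d')) =
      lowerBlock A 0 (diagonalGL (Sum.elim d d' ∘ e.symm)) := by
  rw [reindexGL_sumAssoc_lowerBlock, ← reindexGL_diagonalGL, ← lowerBlock_diagonalGL]
  congr 1
  ext i j
  rcases hi : e.symm i <;> simp [hi]

end BlockMatrices

section IntegralGL

variable {m n R K : Type*} [Fintype m] [DecidableEq m] [Fintype n] [DecidableEq n]
  [CommRing R] [CommRing K] [Algebra R K]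

variable (R) in
/-- `GL_n(R)` as a subgroup of `GL_n(K)`, for an `R`-algebra `K`. -/
def integralGL (n K : Type*) [Fintype n] [DecidableEq n] [CommRing K] [Algebra R K] :
    Subgroup (GL n K) :=
  (GeneralLinearGroup.map (algebraMap R K)).range

theorem apply_mem_range_of_mem_integralGL {A : GL n K} (hA : A ∈ integralGL R n K) (i j : n) :
    A.val i j ∈ (algebraMap R K).range := by
  obtain ⟨A, rfl⟩ := hA
  exact ⟨A i j, rfl⟩

theorem mem_integralGL_of_map_eq [FaithfulSMul R K] {A : GL n K} {B B' : Matrix n n R}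
    (hB : B.map (algebraMap R K) = A.val) (hB' : B'.map (algebraMap R K) = A⁻¹.val) :
    A ∈ integralGL R n K := by
  have hinj : Function.Injective fun C : Matrix n n R => C.map (algebraMap R K) :=
    map_injective (FaithfulSMul.algebraMap_injective R K)
  refine ⟨⟨B, B', hinj ?_, hinj ?_⟩, Units.ext hB⟩ <;> simp [hB, hB', Matrix.map_mul]

theorem diagonalGL_mem_integralGL (d : n → Rˣ) :
    diagonalGL (fun i => Units.map (algebraMap R K : R →* K) (d i)) ∈ integralGL R n K :=
  ⟨diagonalGL d, map_diagonalGL _ _⟩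

theorem lowerBlock_mem_integralGL {A : GL m K} {D : GL n K} (hA : A ∈ integralGL R m K)
    (X : Matrix n m R) (hD : D ∈ integralGL R n K) :
    lowerBlock A (X.map (algebraMap R K)) D ∈ integralGL R (m ⊕ n) K := by
  obtain ⟨A, rfl⟩ := hA
  obtain ⟨D, rfl⟩ := hD
  exact ⟨lowerBlock A X D, map_lowerBlock _ _ _ _⟩

theorem blocks_mem_integralGL_of_lowerBlock [FaithfulSMul R K] {A : GL m K} {X : Matrix n m K}
    {D : GL n K} (h : lowerBlock A X D ∈ integralGL R (m ⊕ n) K) :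
    A ∈ integralGL R m K ∧ D ∈ integralGL R n K := by
  obtain ⟨B, hB⟩ := h
  have hentry (i j) : algebraMap R K (B i j) = (lowerBlock A X D).val i j := by
    rw [← hB]; rfl
  obtain ⟨A₁, Y, D₁, rfl⟩ : ∃ A₁ Y D₁, B = lowerBlock A₁ Y D₁ := by
    refine exists_eq_lowerBlock ?_
    ext i j
    refine FaithfulSMul.algebraMap_injective R K ?_
    simpa [toBlocks₁₂] using hentry (Sum.inl i) (Sum.inr j)
  refine ⟨⟨A₁, ?_⟩, D₁, ?_⟩
  · ext i j
    simpa using hentry (Sum.inl i) (Sum.inl j)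
  · ext i j
    simpa using hentry (Sum.inr i) (Sum.inr j)

theorem lowerBlock_zero_one_mem_integralGL {A : GL m K} (hA : A ∈ integralGL R m K) :
    lowerBlock A 0 (1 : GL n K) ∈ integralGL R (m ⊕ n) K := by
  simpa using lowerBlock_mem_integralGL hA (0 : Matrix n m R) (one_mem _)

theorem reindexGL_mem_integralGL (e : m ≃ n) {A : GL m K} (hA : A ∈ integralGL R m K) :
    reindexGL e A ∈ integralGL R n K := by
  obtain ⟨A, rfl⟩ := hA
  exact ⟨reindexGL e A, map_reindexGL _ _ _⟩

end IntegralGL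

section Uniformizer

variable {R K : Type*} [CommRing R] {ϖ : R}

section

variable [CommRing K] [Algebra R K] {π : Kˣ}

theorem exists_algebraMap_eq_zpow (hπ : algebraMap R K ϖ = π) {k : ℤ} (hk : 0 ≤ k) :
    ∃ r : R, algebraMap R K r = (π ^ k : Kˣ) := by
  lift k to ℕ using hk
  exact ⟨ϖ ^ k, by simp [hπ]⟩

theorem nonneg_of_zpow_mem_range [IsFractionRing R K] (hϖ : Irreducible ϖ)
    (hπ : algebraMap R K ϖ = π) {k : ℤ} (hk : ((π ^ k : Kˣ) : K) ∈ (algebraMap R K).range) :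
    0 ≤ k := by
  by_contra! hlt
  obtain ⟨d, rfl⟩ : ∃ d : ℕ, k = -(d + 1) := ⟨(-k - 1).toNat, by lia⟩
  obtain ⟨r, hr⟩ := hk
  have hone : ϖ ^ (d + 1) * r = 1 := by
    apply IsFractionRing.injective R K
    rw [map_mul, map_pow, hπ, hr, map_one, ← Units.val_pow_eq_pow_val, ← Units.val_mul,
      ← zpow_natCast, ← _root_.zpow_add, Nat.cast_succ, add_neg_cancel, zpow_zero, Units.val_one]
  exact hϖ.not_isUnit (isUnit_of_dvd_one (hone ▸ (dvd_pow_self ϖ d.succ_ne_zero).mul_right r))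

end

variable [IsDomain R] [IsDiscreteValuationRing R] [Field K] [Algebra R K] [IsFractionRing R K]
  {π : Kˣ}

theorem exists_units_eq_mul_zpow (hϖ : Irreducible ϖ) (hπ : algebraMap R K ϖ = π) (x : Kˣ) :
    ∃ (u : Rˣ) (k : ℤ), x = Units.map (algebraMap R K : R →* K) u * π ^ k := by
  obtain ⟨k, u, hx⟩ :=
    IsDiscreteValuationRing.exists_units_eq_smul_zpow_of_irreducible (K := K) hϖ x.ne_zero
  refine ⟨u, k, Units.ext ?_⟩
  rw [hx, hπ, Units.smul_def, Algebra.smul_def]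
  simp

theorem exists_primitive_of_ne_zero (hϖ : Irreducible ϖ) (hπ : algebraMap R K ϖ = π)
    {n : Type*} [Finite n] {v : n → K} (hv : v ≠ 0) :
    ∃ (w : n → R) (i : n) (k : ℤ), IsUnit (w i) ∧
      v = ((π ^ k : Kˣ) : K) • (algebraMap R K ∘ w) := by
  obtain ⟨j, hj⟩ := Function.ne_iff.1 hv
  have : Nonempty n := ⟨j⟩
  obtain ⟨i, hi⟩ := Finite.exists_max fun i => ValuationRing.valuation R K (v i)
  have hvi : v i ≠ 0 := fun h0 => hj <| by simpa [h0] using hi j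
  have hint : ∀ j, ∃ r : R, algebraMap R K r = v j / v i := fun j => by
    rw [← ValuationRing.mem_integer_iff, Valuation.mem_integer_iff, map_div₀]
    exact div_le_one_of_le₀ (hi j) zero_le
  choose w hw using hint
  obtain ⟨u, k, hu⟩ := exists_units_eq_mul_zpow hϖ hπ (Units.mk0 _ hvi)
  have hu' : v i = algebraMap R K u * (π ^ k : Kˣ) := congrArg Units.val hu
  have hwi : w i = 1 := IsFractionRing.injective R K <| by rw [hw, div_self hvi, map_one]
  refine ⟨fun j => u * w j, i, k, by simp [hwi], funext fun j => ?_⟩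
  have hvj : v j = v i * algebraMap R K (w j) := by rw [hw, mul_div_cancel₀ _ hvi]
  simp only [Pi.smul_apply, Function.comp_apply, map_mul, smul_eq_mul]
  rw [hvj, hu']
  ring

end Uniformizer

section Reduction

variable {m n R K : Type*} [Fintype m] [DecidableEq m] [Fintype n] [DecidableEq n]
  [CommRing R]

theorem exists_GL_col_eq {w : n → R} {i : n} (hw : IsUnit (w i)) (j : n) :
    ∃ c : GL n R, c.val.col j = w := by
  have hunit : IsUnit ((1 : Matrix n n R).updateCol i w) := by
    rwa [isUnit_iff_isUnit_det, ← cramer_apply, cramer_one]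
  have hswap : IsUnit (((1 : Matrix n n R).updateCol i w).submatrix (Equiv.refl n)
      (Equiv.swap i j)) := (isUnit_submatrix_equiv _ _).2 hunit
  refine ⟨hswap.unit, funext fun k => ?_⟩
  simp

variable [IsDomain R] [IsDiscreteValuationRing R] [Field K]
  [Algebra R K] [IsFractionRing R K] {ϖ : R} {π : Kˣ}

theorem exists_mul_integralGL_col_eq (hϖ : Irreducible ϖ) (hπ : algebraMap R K ϖ = π)
    (A : GL n K) (j : n) :
    ∃ c ∈ integralGL R n K, ∃ k : ℤ,
      (A * c).val.col j = ((π ^ k : Kˣ) : K) • Pi.single j (1 : K) := by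
  have hcol : A.val *ᵥ A⁻¹.val.col j = Pi.single j 1 := by
    rw [← mulVec_single_one, mulVec_mulVec, Units.mul_inv, one_mulVec]
  have hne : A⁻¹.val.col j ≠ 0 := fun h0 => by
    rw [h0, mulVec_zero] at hcol
    simpa using congrFun hcol j
  obtain ⟨w, i, k, hwi, hw⟩ := exists_primitive_of_ne_zero hϖ hπ hne
  obtain ⟨c, hc⟩ := exists_GL_col_eq hwi j
  refine ⟨GeneralLinearGroup.map (algebraMap R K) c, ⟨c, rfl⟩, -k, ?_⟩
  have hcw : (GeneralLinearGroup.map (algebraMap R K) c).val.col j =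
      ((π ^ (-k) : Kˣ) : K) • A⁻¹.val.col j := by
    rw [hw, smul_smul, _root_.zpow_neg, Units.inv_mul, one_smul, ← hc]
    rfl
  rw [← mulVec_single_one, Units.val_mul, ← mulVec_mulVec, mulVec_single_one, hcw, mulVec_smul,
    hcol]

theorem exists_mul_integralGL_eq_lowerBlock (hϖ : Irreducible ϖ) (hπ : algebraMap R K ϖ = π)
    (A : GL (m ⊕ Fin 1) K) :
    ∃ c ∈ integralGL R (m ⊕ Fin 1) K, ∃ A' x, ∃ k : ℤ,
      A * c = lowerBlock A' x (diagonalGL fun _ => π ^ k) := by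
  obtain ⟨c, hc, k, hcol⟩ := exists_mul_integralGL_col_eq hϖ hπ A (Sum.inr 0)
  have hzero : (A * c).val.toBlocks₁₂ = 0 := by
    ext i j
    rw [Subsingleton.elim j 0]
    simpa [toBlocks₁₂] using congrFun hcol (Sum.inl i)
  obtain ⟨A', x, D, hAc⟩ := exists_eq_lowerBlock hzero
  refine ⟨c, hc, A', x, k, ?_⟩
  suffices D = diagonalGL fun _ => π ^ k by rw [hAc, this]
  ext i j
  rw [hAc] at hcol
  rw [Subsingleton.elim i 0, Subsingleton.elim j 0]
  simpa using congrFun hcol (Sum.inr 0)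

end Reduction

section Unipotent

variable {m n R K : Type*} [Fintype m] [DecidableEq m] [Fintype n] [LinearOrder n] [CommRing R]

theorem mul_apply_diag_of_isLowerTriangular {u v : Matrix n n R} (hu : u.IsLowerTriangular)
    (hv : v.IsLowerTriangular) (i : n) : (u * v) i i = u i i * v i i := by
  rw [mul_apply]
  refine Finset.sum_eq_single i (fun k _ hk => ?_) (by simp)
  rcases hk.lt_or_gt with hk | hk
  · rw [hv (OrderDual.toDual_lt_toDual.2 hk), mul_zero]
  · rw [hu (OrderDual.toDual_lt_toDual.2 hk), zero_mul]

/-- The group of lower triangular matrices with `1`s on the diagonal. -/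
def lowerUnitriangular (n R : Type*) [Fintype n] [LinearOrder n] [CommRing R] :
    Subgroup (GL n R) where
  carrier := {u | u.val.IsLowerTriangular ∧ ∀ i, u.val i i = 1}
  one_mem' := ⟨blockTriangular_one, by simp⟩
  mul_mem' := by
    rintro u v ⟨hu, hu1⟩ ⟨hv, hv1⟩
    refine ⟨hu.mul hv, fun i => ?_⟩
    rw [Units.val_mul, mul_apply_diag_of_isLowerTriangular hu hv, hu1, hv1, one_mul]
  inv_mem' := by
    rintro u ⟨hu, hu1⟩
    have hinv : u⁻¹.val.IsLowerTriangular := by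
      have := u.invertible
      rw [coe_units_inv]
      exact blockTriangular_inv_of_blockTriangular hu
    refine ⟨hinv, fun i => ?_⟩
    have hdiag := mul_apply_diag_of_isLowerTriangular hu hinv i
    rwa [Units.mul_inv, one_apply_eq, hu1, one_mul, eq_comm] at hdiag

theorem reindexGL_lowerBlock_mem_lowerUnitriangular {N : ℕ} {u : GL (Fin N) R}
    (hu : u ∈ lowerUnitriangular (Fin N) R) (x : Matrix (Fin 1) (Fin N) R) :
    reindexGL finSumFinEquiv (lowerBlock u x 1) ∈ lowerUnitriangular (Fin (N + 1)) R := by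
  obtain ⟨hu, hu1⟩ := hu
  refine ⟨fun i j hij => ?_, Fin.lastCases (by simp) fun i => by simp [hu1]⟩
  rw [OrderDual.toDual_lt_toDual] at hij
  obtain ⟨i, rfl⟩ := Fin.exists_castSucc_eq.2 (Fin.ne_last_of_lt hij)
  induction j using Fin.lastCases with
  | last => simp
  | cast j =>
    simpa using hu (OrderDual.toDual_lt_toDual.2 (Fin.castSucc_lt_castSucc_iff.1 hij))

theorem exists_mul_mul_integralGL_eq_lowerBlock_diagonalGL [IsDomain R]
    [IsDiscreteValuationRing R] [Field K] [Algebra R K] [IsFractionRing R K] {ϖ : R} {π : Kˣ}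
    (hϖ : Irreducible ϖ) (hπ : algebraMap R K ϖ = π) {N : ℕ} (A : GL (m ⊕ Fin N) K) :
    ∃ X, ∃ u ∈ lowerUnitriangular (Fin N) K, ∃ c ∈ integralGL R (m ⊕ Fin N) K,
      ∃ A' : GL m K, ∃ k : Fin N → ℤ,
        lowerBlock 1 X u * A * c = lowerBlock A' 0 (diagonalGL fun i => π ^ k i) := by
  induction N with
  | zero =>
    obtain ⟨A', X, D, hA⟩ := exists_eq_lowerBlock (A := A) (Subsingleton.elim _ _)
    refine ⟨0, 1, one_mem _, 1, one_mem _, A', 0, ?_⟩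
    rw [lowerBlock_one, one_mul, mul_one, hA]
    congr 1 <;> exact Subsingleton.elim _ _
  | succ N ih =>
    let e := (Equiv.sumAssoc m (Fin N) (Fin 1)).trans ((Equiv.refl m).sumCongr finSumFinEquiv)
    obtain ⟨c, hc, B, x, k, hB⟩ :=
      exists_mul_integralGL_eq_lowerBlock hϖ hπ (reindexGL e.symm A)
    obtain ⟨X, u, hu, c', hc', A', k', hA'⟩ := ih B
    let Y : Matrix (Fin 1) (m ⊕ Fin N) K := -(x * B⁻¹.val)
    have hclear : lowerBlock (lowerBlock 1 X u) Y 1 * (reindexGL e.symm A * c) *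
        lowerBlock c' 0 1 = lowerBlock (lowerBlock A' 0 (diagonalGL fun i => π ^ k' i)) 0
          (diagonalGL fun _ => π ^ k) := by
      rw [hB, lowerBlock_mul, lowerBlock_mul, hA']
      simp [Y, Matrix.mul_assoc]
    refine ⟨(fromRows X Y.toCols₁).submatrix finSumFinEquiv.symm id, _,
      reindexGL_lowerBlock_mem_lowerUnitriangular hu Y.toCols₂,
      reindexGL e (c * lowerBlock c' 0 1), reindexGL_mem_integralGL e <|
        mul_mem hc <| lowerBlock_zero_one_mem_integralGL hc', A',
      Sum.elim k' (fun _ => k) ∘ finSumFinEquiv.symm, ?_⟩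
    have hA : A = reindexGL e (reindexGL e.symm A) := by ext; simp
    rw [← reindexGL_sumAssoc_lowerBlock, hA, ← map_mul, ← map_mul, ← mul_assoc, mul_assoc _ _ c,
      hclear, reindexGL_sumAssoc_lowerBlock_diagonalGL]
    congr 2
    ext i
    rcases hi : finSumFinEquiv.symm i <;> simp [hi]

end Unipotent

section Smith

theorem exists_map_algebraMap_eq_smul {n R K : Type*} [Finite n] [CommRing R] [CommRing K]
    [Algebra R K] [IsFractionRing R K] (A : Matrix n n K) :
    ∃ (b : Kˣ) (B : Matrix n n R), B.map (algebraMap R K) = (b : K) • A := by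
  obtain ⟨b, hb⟩ := IsLocalization.exist_integer_multiples_of_finite (nonZeroDivisors R)
    fun ij : n × n => A ij.1 ij.2
  choose B hB using fun i j => hb (i, j)
  refine ⟨(IsLocalization.map_units K b).unit, of B, ?_⟩
  ext i j
  simpa [Algebra.smul_def] using hB i j

variable {n R : Type*} [Fintype n] [DecidableEq n] [CommRing R]

theorem exists_GL_mul_mul_GL_eq_diagonal [IsDomain R] [IsPrincipalIdealRing R] {A : Matrix n n R}
    (hA : A.det ≠ 0) : ∃ (U V : GL n R) (a : n → R), U.val * A * V.val = diagonal a := by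
  have hinj : Function.Injective (toLin' A) := mulVec_injective_of_det_ne_zero hA
  let E := LinearEquiv.ofInjective (toLin' A) hinj
  let e := Pi.basisFun R n
  obtain ⟨b, a, b', hb⟩ := Submodule.exists_smith_normal_form_of_rank_eq e E.finrank_eq.symm
  let v : Module.Basis n R (n → R) := b'.map E.symm
  have hv (j : n) : toLin' A (v j) = a j • b j := by
    rw [← hb, Module.Basis.map_apply, ← LinearEquiv.ofInjective_apply (toLin' A) (h := hinj)]
    exact congrArg Subtype.val (E.apply_symm_apply _)
  have hdiag : LinearMap.toMatrix v b (toLin' A) = diagonal a := by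
    ext i j
    rw [LinearMap.toMatrix_apply, hv, map_smul, Module.Basis.repr_self, Finsupp.smul_single,
      smul_eq_mul, mul_one, diagonal_apply, Finsupp.single_apply]
    grind
  refine ⟨⟨b.toMatrix e, e.toMatrix b, by simp, by simp⟩,
    ⟨e.toMatrix v, v.toMatrix e, by simp, by simp⟩, a, ?_⟩
  rw [← hdiag, ← basis_toMatrix_mul_linearMap_toMatrix_mul_basis_toMatrix v e b e]
  exact congrArg (b.toMatrix e * · * e.toMatrix v) (LinearMap.toMatrix'_toLin' A).symm

theorem exists_eq_diagonalGL {A : GL n R} {d : n → R} (hA : A.val = diagonal d) :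
    ∃ d' : n → Rˣ, A = diagonalGL d' := by
  have hd := Pi.isUnit_iff.1 (isUnit_diagonal.1 (hA ▸ A.isUnit))
  exact ⟨fun i => (hd i).unit, Units.ext <| by simp [hA]⟩

theorem exists_mem_integralGL_conj_diagonalGL {K : Type*} [CommRing K] [Algebra R K]
    (σ : Equiv.Perm n) (d : n → Kˣ) :
    ∃ P ∈ integralGL R n K, P * diagonalGL d * P⁻¹ = diagonalGL (d ∘ σ) := by
  let P : GL n R := (permMatrixHom : Equiv.Perm n →* Matrix n n R).toHomUnits σ⁻¹
  have hP : (GeneralLinearGroup.map (algebraMap R K) P).val = σ.permMatrix K := by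
    change (σ⁻¹⁻¹.permMatrix R).map (algebraMap R K) = _
    rw [inv_inv, PEquiv.map_toMatrix]
  refine ⟨GeneralLinearGroup.map (algebraMap R K) P, ⟨P, rfl⟩, ?_⟩
  rw [mul_inv_eq_iff_eq_mul]
  ext i j
  rw [Units.val_mul, Units.val_mul, hP]
  simp only [coe_diagonalGL, PEquiv.toMatrix_apply, Equiv.toPEquiv_apply, mul_diagonal,
    diagonal_mul, Option.mem_some_iff, ite_mul, mul_ite, one_mul, mul_one, zero_mul, mul_zero,
    Function.comp_apply]
  grind

variable {K : Type*} [IsDomain R] [IsDiscreteValuationRing R] [Field K] [Algebra R K]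
  [IsFractionRing R K] {ϖ : R} {π : Kˣ}

theorem exists_integralGL_mul_mul_eq_diagonalGL (hϖ : Irreducible ϖ)
    (hπ : algebraMap R K ϖ = π) (A : GL n K) :
    ∃ U ∈ integralGL R n K, ∃ V ∈ integralGL R n K, ∃ a : n → ℤ,
      U * A * V = diagonalGL fun i => π ^ a i := by
  obtain ⟨b, B, hB⟩ := exists_map_algebraMap_eq_smul (R := R) A.val
  have hdet : B.det ≠ 0 := fun h0 => by
    have hbA : ((b : K) • A.val).det = 0 := by
      rw [← hB, ← RingHom.mapMatrix_apply, ← RingHom.map_det, h0, map_zero]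
    rw [det_smul] at hbA
    exact mul_ne_zero (pow_ne_zero _ b.ne_zero) A.det.ne_zero hbA
  obtain ⟨U, V, a, hUV⟩ := exists_GL_mul_mul_GL_eq_diagonal hdet
  let ι : GL n R →* GL n K := GeneralLinearGroup.map (algebraMap R K)
  have hUAV : (ι U * A * ι V).val = diagonal fun i => (b⁻¹ : Kˣ) * algebraMap R K (a i) :=
    calc (ι U * A * ι V).val
        = (b⁻¹ : Kˣ).val • ((ι U).val * ((b : K) • A.val) * (ι V).val) := by
          simp [smul_smul, -GeneralLinearGroup.map_apply]
      _ = (b⁻¹ : Kˣ).val • (U.val * B * V.val).map (algebraMap R K) := by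
          rw [← hB, Matrix.map_mul, Matrix.map_mul]
          rfl
      _ = _ := by
          rw [hUV, diagonal_map (map_zero _), ← diagonal_smul]
          rfl
  obtain ⟨d, hd⟩ := exists_eq_diagonalGL hUAV
  choose u k huk using fun i => exists_units_eq_mul_zpow hϖ hπ (d i)
  refine ⟨ι U, ⟨U, rfl⟩, ι V * (diagonalGL fun i => Units.map (algebraMap R K : R →* K) (u i))⁻¹,
    mul_mem ⟨V, rfl⟩ (inv_mem (diagonalGL_mem_integralGL u)), k, ?_⟩
  rw [← mul_assoc, hd, mul_inv_eq_iff_eq_mul, ← map_mul]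
  congr 1
  ext i
  simp [huk, mul_comm]

theorem exists_integralGL_mul_mul_eq_diagonalGL_monotone (hϖ : Irreducible ϖ)
    (hπ : algebraMap R K ϖ = π) {N : ℕ} (A : GL (Fin N) K) :
    ∃ U ∈ integralGL R (Fin N) K, ∃ V ∈ integralGL R (Fin N) K, ∃ a : Fin N → ℤ,
      Monotone a ∧ U * A * V = diagonalGL fun i => π ^ a i := by
  obtain ⟨U, hU, V, hV, a, hUV⟩ := exists_integralGL_mul_mul_eq_diagonalGL hϖ hπ A
  obtain ⟨P, hP, hPσ⟩ :=
    exists_mem_integralGL_conj_diagonalGL (R := R) (Tuple.sort a) fun i => π ^ a i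
  exact ⟨P * U, mul_mem hP hU, V * P⁻¹, mul_mem hV (inv_mem hP), a ∘ Tuple.sort a,
    Tuple.monotone_sort a, by
      simpa [mul_assoc, ← hUV, Function.comp_def] using hPσ⟩

end Smith

section RowNormalization

theorem exists_le_forall_le_add {n α : Type*} [Finite n] [AddCommGroup α] [LinearOrder α]
    [IsOrderedAddMonoid α] {d : n → n → α} (hd : ∀ i, d i i = 0)
    (hd' : ∀ i j l, d i l ≤ d i j + d j l) (k : n → α) :
    ∃ (θ : n → α) (f : n → n), (∀ i, θ i ≤ k i) ∧ (∀ i j, θ i ≤ d i j + θ j) ∧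
      ∀ i, θ i = d i (f i) + k (f i) ∧ θ (f i) = k (f i) := by
  have hmin (i : n) : ∃ j, ∀ l, d i j + k j ≤ d i l + k l :=
    have : Nonempty n := ⟨i⟩
    Finite.exists_min fun j => d i j + k j
  choose f hf using hmin
  have hle (i : n) : d i (f i) + k (f i) ≤ k i := by simpa [hd] using hf i i
  refine ⟨fun i => d i (f i) + k (f i), f, hle, fun i j => ?_, fun i => ⟨rfl, ?_⟩⟩
  · calc d i (f i) + k (f i) ≤ d i (f j) + k (f j) := hf i (f j)
      _ ≤ d i j + d j (f j) + k (f j) := by gcongr; exact hd' i j (f j)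
      _ = d i j + (d j (f j) + k (f j)) := add_assoc _ _ _
  · refine (hle (f i)).antisymm (le_of_add_le_add_left (a := d i (f i)) ?_)
    calc d i (f i) + k (f i) ≤ d i (f (f i)) + k (f (f i)) := hf i _
      _ ≤ d i (f i) + d (f i) (f (f i)) + k (f (f i)) := by gcongr; exact hd' i (f i) _
      _ = d i (f i) + (d (f i) (f (f i)) + k (f (f i))) := add_assoc _ _ _

variable {n R K : Type*} [Fintype n] [DecidableEq n] [CommRing R] [CommRing K] [Algebra R K]
  {ϖ : R} {π : Kˣ}

theorem exists_GL_eq_one_add {f : n → n} {s : n → R} (hs : ∀ j, s (f j) = 0) :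
    ∃ c : GL n R, c.val = 1 + of fun i j => if i = f j then s j else 0 := by
  have hsq : IsNilpotent (of fun i j => if i = f j then s j else 0) := by
    refine ⟨2, ?_⟩
    ext i j
    simp [sq, mul_apply, hs]
  exact ⟨hsq.isUnit_one_add.unit, rfl⟩

theorem exists_diagonalGL_mul_eq_mul_forall_vecMul_apply (hπ : algebraMap R K ϖ = π) (a : n → ℤ)
    {f : n → n} {s : n → R} (hs : ∀ i, s (f i) = 0) :
    ∃ g ∈ integralGL R n K, ∃ c ∈ integralGL R n K,
      (diagonalGL fun i => π ^ a i) * c = (g * diagonalGL fun i => π ^ a i) ∧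
      ∀ (x : n → K) j, (x ᵥ* c.val) j = x j + x (f j) *
        ((π ^ max 0 (a j - a (f j)) : Kˣ) * algebraMap R K (s j)) := by
  choose p hp using fun i => exists_algebraMap_eq_zpow hπ (le_max_left 0 (a i - a (f i)))
  choose q hq using fun i => exists_algebraMap_eq_zpow hπ (le_max_left 0 (a (f i) - a i))
  obtain ⟨c, hc⟩ := exists_GL_eq_one_add (s := fun i => p i * s i) (f := f) (by simp [hs])
  obtain ⟨g, hg⟩ := exists_GL_eq_one_add (s := fun i => q i * s i) (f := f) (by simp [hs])
  refine ⟨_, ⟨g, rfl⟩, _, ⟨c, rfl⟩, ?_, fun x j => ?_⟩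
  · have hpq (j : n) : ((π ^ a (f j) : Kˣ) : K) * algebraMap R K (p j * s j) =
        algebraMap R K (q j * s j) * (π ^ a j : Kˣ) := by
      rw [map_mul, map_mul, hp, hq, mul_right_comm, ← mul_assoc, ← Units.val_mul,
        ← Units.val_mul, ← _root_.zpow_add, ← _root_.zpow_add]
      congr 3
      grind
    ext i j
    have hij : ((π ^ a i : Kˣ) : K) * (1 : Matrix n n K) i j =
        (1 : Matrix n n K) i j * (π ^ a j : Kˣ) := by
      rcases eq_or_ne i j with rfl | hne
      · exact mul_comm _ _
      · simp [hne]
    rcases eq_or_ne i (f j) with rfl | hi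
    · simpa [hc, hg, mul_add, add_mul, Matrix.map_add] using congrArg₂ (· + ·) hij (hpq j)
    · simpa [hc, hg, hi, Matrix.map_add] using hij
  · rw [← hp, ← map_mul, vecMul_eq_sum, Finset.sum_apply]
    simp [hc, mul_add, Finset.sum_add_distrib, apply_ite (algebraMap R K), one_apply]

theorem exists_diagonalGL_mul_eq_mul_and_vecMul_eq [FaithfulSMul R K] (hπ : algebraMap R K ϖ = π)
    (a k : n → ℤ) :
    ∃ θ : n → ℤ, (∀ i, θ i ≤ k i) ∧ (∀ i j, θ i ≤ max 0 (a i - a j) + θ j) ∧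
      ∃ g ∈ integralGL R n K, ∃ c ∈ integralGL R n K,
        (diagonalGL fun i => π ^ a i) * c = (g * diagonalGL fun i => π ^ a i) ∧
        (fun i => ((π ^ k i : Kˣ) : K)) ᵥ* c.val = fun i => ((π ^ θ i : Kˣ) : K) := by
  obtain ⟨θ, f, hθk, hθ, hf⟩ := exists_le_forall_le_add (d := fun i j => max 0 (a i - a j))
    (by simp) (by grind) k
  choose e he using fun i => exists_algebraMap_eq_zpow hπ (sub_nonneg.2 (hθk i))
  have hef (i : n) : 1 - e (f i) = 0 := FaithfulSMul.algebraMap_injective R K <| by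
    have hfi : k (f i) - θ (f i) = 0 := sub_eq_zero.2 (hf i).2.symm
    rw [map_sub, he, hfi, zpow_zero, map_one, Units.val_one, sub_self, map_zero]
  obtain ⟨g, hg, c, hc, hgc, hrow⟩ :=
    exists_diagonalGL_mul_eq_mul_forall_vecMul_apply hπ a (s := fun i => 1 - e i) hef
  refine ⟨θ, hθk, hθ, g, hg, c, hc, hgc, ?_⟩
  ext j
  have hkf : ((π ^ k (f j) : Kˣ) : K) * (π ^ max 0 (a j - a (f j)) : Kˣ) = (π ^ θ j : Kˣ) := by
    rw [← Units.val_mul, ← _root_.zpow_add, (hf j).1, add_comm]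
  have hkθ : ((π ^ θ j : Kˣ) : K) * (π ^ (k j - θ j) : Kˣ) = (π ^ k j : Kˣ) := by
    rw [← Units.val_mul, ← _root_.zpow_add, add_sub_cancel]
  rw [hrow, ← mul_assoc, hkf, map_sub, map_one, he, mul_sub, mul_one, hkθ, add_sub_cancel]

end RowNormalization

section RowNormalForm

variable {n R K : Type*} [Fintype n] [DecidableEq n] [CommRing R] [IsDomain R]
  [IsDiscreteValuationRing R] [Field K] [Algebra R K] [IsFractionRing R K] {ϖ : R} {π : Kˣ}

theorem exists_mul_units_add_eq_zpow (hϖ : Irreducible ϖ) (hπ : algebraMap R K ϖ = π) (x : K)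
    (b : ℤ) : ∃ (u : Rˣ) (r : R), ∃ k ≤ b,
      x * algebraMap R K u + (π ^ b : Kˣ) * algebraMap R K r = (π ^ k : Kˣ) := by
  rcases eq_or_ne x 0 with rfl | hx
  · exact ⟨1, 1, b, le_rfl, by simp⟩
  obtain ⟨u, k, hu⟩ := exists_units_eq_mul_zpow hϖ hπ (Units.mk0 x hx)
  replace hu : x = algebraMap R K u * (π ^ k : Kˣ) := congrArg Units.val hu
  rcases le_or_gt k b with hkb | hbk
  · refine ⟨u⁻¹, 0, k, hkb, ?_⟩
    rw [hu, mul_right_comm, ← map_mul, Units.mul_inv, map_one, map_zero, mul_zero, one_mul,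
      add_zero]
  · obtain ⟨s, hs⟩ := exists_algebraMap_eq_zpow hπ (sub_nonneg.2 hbk.le)
    refine ⟨1, 1 - u * s, b, le_rfl, ?_⟩
    have hbs : ((π ^ b : Kˣ) : K) * algebraMap R K s = (π ^ k : Kˣ) := by
      rw [hs, ← Units.val_mul, ← _root_.zpow_add, add_sub_cancel]
    rw [hu, ← hbs, map_sub, map_mul, map_one, Units.val_one, map_one]
    ring

theorem exists_mul_eq_lowerBlock_replicateRow (hϖ : Irreducible ϖ) (hπ : algebraMap R K ϖ = π)
    (a : n → ℤ) (x : Matrix (Fin 1) n K) (b : ℤ) :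
    ∃ θ : n → ℤ, (∀ i, θ i ≤ b) ∧ (∀ i j, θ i ≤ max 0 (a i - a j) + θ j) ∧
      ∃ g ∈ integralGL R n K, ∃ C ∈ integralGL R (n ⊕ Fin 1) K,
        lowerBlock g 0 1 *
            lowerBlock (diagonalGL fun i => π ^ a i) x (diagonalGL fun _ => π ^ b) * C =
          lowerBlock (diagonalGL fun i => π ^ a i)
            (replicateRow (Fin 1) fun i => ((π ^ θ i : Kˣ) : K)) (diagonalGL fun _ => π ^ b) := by
  choose u r k hkb hk using fun i => exists_mul_units_add_eq_zpow hϖ hπ (x 0 i) b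
  obtain ⟨θ, hθk, hθ, g, hg, c, hc, hgc, hrow⟩ :=
    exists_diagonalGL_mul_eq_mul_and_vecMul_eq hπ a k
  let D : GL n K := diagonalGL fun i => π ^ a i
  let E : GL (Fin 1) K := diagonalGL fun _ => π ^ b
  let T : GL n K := diagonalGL fun i => Units.map (algebraMap R K : R →* K) (u i)
  let X : Matrix (Fin 1) n K := (replicateRow (Fin 1) r).map (algebraMap R K)
  have hT : T ∈ integralGL R n K := diagonalGL_mem_integralGL u
  have hTD : D * T = T * D := by
    rw [← map_mul, ← map_mul, mul_comm]
  have hX : x * T.val + E.val * X = replicateRow (Fin 1) fun i => ((π ^ k i : Kˣ) : K) := by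
    ext i j
    rw [Subsingleton.elim i 0]
    simpa [T, E, X] using hk j
  refine ⟨θ, fun i => (hθk i).trans (hkb i), hθ, (T * g)⁻¹, inv_mem (mul_mem hT hg),
    lowerBlock T X 1 * lowerBlock c 0 1,
    mul_mem (lowerBlock_mem_integralGL hT _ (one_mem _))
      (lowerBlock_zero_one_mem_integralGL hc), ?_⟩
  change lowerBlock (T * g)⁻¹ 0 1 * lowerBlock D x E * (lowerBlock T X 1 * lowerBlock c 0 1) =
    lowerBlock D _ E
  have hD : (T * g)⁻¹ * (D * T * c) = D := by
    rw [inv_mul_eq_iff_eq_mul, hTD, mul_assoc, hgc, mul_assoc]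
  rw [mul_assoc, ← mul_assoc (lowerBlock D x E), lowerBlock_mul D, hX, lowerBlock_mul,
    lowerBlock_mul, hD, ← replicateRow_vecMul, hrow]
  simp

end RowNormalForm

section NormalForm

/-- The group `GL_m(R) ⋉ U⁻(K)` acting on the affine Grassmannian, where `U⁻` is the unipotent
radical of the block lower triangular parabolic with one block `m ⊕ Fin 1` followed by blocks of
size one indexed by `n`. -/
def orbitGroup (R m n K : Type*) [Fintype m] [DecidableEq m] [Fintype n] [LinearOrder n]
    [CommRing R] [CommRing K] [Algebra R K] : Subgroup (GL ((m ⊕ Fin 1) ⊕ n) K) where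
  carrier := {P | ∃ g ∈ integralGL R m K, ∃ X, ∃ u ∈ lowerUnitriangular n K,
    P = lowerBlock (lowerBlock g 0 1) X u}
  one_mem' := ⟨1, one_mem _, 0, 1, one_mem _, by rw [lowerBlock_one, lowerBlock_one]⟩
  mul_mem' := by
    rintro _ _ ⟨g, hg, X, u, hu, rfl⟩ ⟨g', hg', X', u', hu', rfl⟩
    exact ⟨g * g', mul_mem hg hg', _, u * u', mul_mem hu hu',
      (lowerBlock_mul _ _ _ _ _ _).trans <| by rw [lowerBlock_zero_one_mul]⟩
  inv_mem' := by
    rintro _ ⟨g, hg, X, u, hu, rfl⟩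
    exact ⟨g⁻¹, inv_mem hg, _, u⁻¹, inv_mem hu,
      (lowerBlock_inv _ _ _).trans <| by rw [lowerBlock_zero_one_inv]⟩

/-- The orbits of `orbitGroup` on the affine Grassmannian `GL(K)/GL(R)`, as an equivalence
relation on `GL(K)`. -/
abbrev orbitSetoid (R m n K : Type*) [Fintype m] [DecidableEq m] [Fintype n] [LinearOrder n]
    [CommRing R] [CommRing K] [Algebra R K] : Setoid (GL ((m ⊕ Fin 1) ⊕ n) K) :=
  DoubleCoset.setoid (orbitGroup R m n K) (integralGL R ((m ⊕ Fin 1) ⊕ n) K)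

section

variable {K : Type*} [CommRing K] {M N : ℕ}

/-- The matrix `L_{(λ,θ)}`, the upper-left block of `normalForm`. -/
def cornerForm (π : Kˣ) (lam : Fin M → ℤ) (th : Fin (M + 1) → ℤ) : GL (Fin M ⊕ Fin 1) K :=
  lowerBlock (diagonalGL fun i => π ^ (lam i + th i.castSucc))
    (replicateRow (Fin 1) fun i => ((π ^ th i.castSucc : Kˣ) : K))
    (diagonalGL fun _ => π ^ th (Fin.last M))

/-- The representative `L_{(λ,(θ,θ'))}` of an orbit. -/
def normalForm (π : Kˣ) (lam : Fin M → ℤ) (th : Fin (M + 1) → ℤ) (th' : Fin N → ℤ) :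
    GL ((Fin M ⊕ Fin 1) ⊕ Fin N) K :=
  lowerBlock (cornerForm π lam th) 0 (diagonalGL fun i => π ^ th' i)

end

variable {R K : Type*} [CommRing R] [IsDomain R] [IsDiscreteValuationRing R] [Field K]
  [Algebra R K] [IsFractionRing R K] {ϖ : R} {π : Kˣ} {M N : ℕ}

theorem exists_lowerBlock_mul_mul_eq_cornerForm (hϖ : Irreducible ϖ) (hπ : algebraMap R K ϖ = π)
    (A : GL (Fin M ⊕ Fin 1) K) :
    ∃ lam th, Monotone lam ∧ Monotone th ∧ ∃ g ∈ integralGL R (Fin M) K,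
      ∃ C ∈ integralGL R (Fin M ⊕ Fin 1) K,
        lowerBlock g 0 1 * A * C = cornerForm π lam th := by
  obtain ⟨C₁, hC₁, B, x, b, hB⟩ := exists_mul_integralGL_eq_lowerBlock hϖ hπ A
  obtain ⟨U, hU, V, hV, a, ha, hUV⟩ := exists_integralGL_mul_mul_eq_diagonalGL_monotone hϖ hπ B
  obtain ⟨θ, hθb, hθ, g, hg, C₂, hC₂, hgC⟩ :=
    exists_mul_eq_lowerBlock_replicateRow hϖ hπ a (x * V.val) b
  refine ⟨fun i => a i - θ i, Fin.snoc θ b, fun i j hij => ?_, ?_, g * U, mul_mem hg hU,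
    C₁ * lowerBlock V 0 1 * C₂,
    mul_mem (mul_mem hC₁ (lowerBlock_zero_one_mem_integralGL hV)) hC₂, ?_⟩
  · have := hθ j i
    have := ha hij
    grind
  · intro i j hij
    induction j using Fin.lastCases with
    | last => induction i using Fin.lastCases <;> simp [hθb]
    | cast j =>
      obtain ⟨i, rfl⟩ :=
        Fin.exists_castSucc_eq.2 (Fin.ne_last_of_lt (hij.trans_lt j.castSucc_lt_last))
      have := hθ i j
      have := ha (Fin.castSucc_le_castSucc_iff.1 hij)
      grind [Fin.snoc_castSucc]
  · have hUV1 : lowerBlock U 0 1 * (A * C₁) * lowerBlock V 0 1 =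
        lowerBlock (diagonalGL fun i => π ^ a i) (x * V.val) (diagonalGL fun _ => π ^ b) := by
      rw [hB, lowerBlock_mul, lowerBlock_mul, hUV]
      simp
    calc _ = lowerBlock g 0 1 * (lowerBlock U 0 1 * (A * C₁) * lowerBlock V 0 1) * C₂ := by
          rw [← lowerBlock_zero_one_mul]
          group
      _ = _ := by
          rw [hUV1, hgC]
          simp [cornerForm]

theorem exists_orbitSetoid_normalForm (hϖ : Irreducible ϖ) (hπ : algebraMap R K ϖ = π)
    (A : GL ((Fin M ⊕ Fin 1) ⊕ Fin N) K) :
    ∃ lam th th', Monotone lam ∧ Monotone th ∧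
      orbitSetoid R (Fin M) (Fin N) K A (normalForm π lam th th') := by
  obtain ⟨X, u, hu, c, hc, A', th', hA'⟩ :=
    exists_mul_mul_integralGL_eq_lowerBlock_diagonalGL hϖ hπ A
  obtain ⟨lam, th, hlam, hth, g, hg, C, hC, hgC⟩ :=
    exists_lowerBlock_mul_mul_eq_cornerForm hϖ hπ A'
  refine ⟨lam, th, th', hlam, hth, Setoid.trans'
    (y := lowerBlock A' 0 _) _
    (DoubleCoset.rel_iff.2 ⟨lowerBlock 1 X u, ⟨1, one_mem _, X, u, hu, ?_⟩, c, hc, hA'.symm⟩)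
    (DoubleCoset.rel_iff.2 ⟨lowerBlock (lowerBlock g 0 1) 0 1, ⟨g, hg, 0, 1, one_mem _, rfl⟩,
      lowerBlock C 0 1, ?_, ?_⟩)⟩
  · rw [lowerBlock_one]
  · exact lowerBlock_zero_one_mem_integralGL hC
  · simp [normalForm, ← hgC, lowerBlock_mul]

end NormalForm

section Uniqueness

theorem det_eq_zero_of_forall_le {n R : Type*} [Fintype n] [LinearOrder n] [CommRing R]
    {A : Matrix n n R} (i : n) (hA : ∀ j k, j ≤ i → i ≤ k → A k j = 0) : A.det = 0 := by
  rw [det_apply]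
  refine Finset.sum_eq_zero fun σ _ => ?_
  obtain ⟨j, hji, hij⟩ : ∃ j ≤ i, i ≤ σ j := by
    by_contra! hlt
    have hcard := Finset.card_le_card_of_injOn (s := Finset.univ.filter (· ≤ i))
      (t := Finset.univ.filter (· < i)) σ (by simpa [Set.MapsTo] using hlt) σ.injective.injOn
    have hssub : Finset.univ.filter (· < i) ⊂ Finset.univ.filter (· ≤ i) :=
      Finset.ssubset_iff_of_subset (fun j => by simpa using le_of_lt) |>.2 ⟨i, by simp⟩
    exact hcard.not_gt (Finset.card_lt_card hssub)
  have hprod : ∏ i, A (σ i) i = 0 := Finset.prod_eq_zero (Finset.mem_univ j) (hA j (σ j) hji hij)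
  rw [hprod, smul_zero]

variable {R K : Type*} [CommRing R] [CommRing K] [Algebra R K] {ϖ : R} {π : Kˣ}

theorem zpow_sub_mul_diagonalGL_inv_mul_mul_apply_mem_range {n : Type*}
    [Fintype n] [LinearOrder n] (hπ : algebraMap R K ϖ = π) {a θ : n → ℤ} (hθ : Monotone θ)
    (haθ : Monotone (a - θ)) {g : GL n K} (hg : g ∈ integralGL R n K)
    (h : (diagonalGL fun i => π ^ a i)⁻¹ * g * (diagonalGL fun i => π ^ a i) ∈ integralGL R n K)
    (i j : n) :
    ((π ^ (θ i - θ j) : Kˣ) : K) *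
        ((diagonalGL fun i => π ^ a i)⁻¹ * g * diagonalGL fun i => π ^ a i).val i j ∈
      (algebraMap R K).range := by
  rcases le_total j i with hji | hij
  · exact mul_mem (exists_algebraMap_eq_zpow hπ (sub_nonneg.2 (hθ hji)))
      (apply_mem_range_of_mem_integralGL h _ _)
  · have hpow : π ^ ((a - θ) j - (a - θ) i) = π ^ (θ i - θ j) * ((π ^ a i)⁻¹ * π ^ a j) := by
      rw [← _root_.zpow_neg, ← _root_.zpow_add, ← _root_.zpow_add, Pi.sub_apply, Pi.sub_apply]
      ring_nf
    convert mul_mem (exists_algebraMap_eq_zpow hπ (sub_nonneg.2 (haθ hij)))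
      (apply_mem_range_of_mem_integralGL hg i j) using 1
    rw [diagonalGL_inv_mul_mul_diagonalGL_apply, hpow, Units.val_mul, Units.val_mul]
    ring

variable [IsFractionRing R K]

theorem le_of_diagonalGL_inv_mul_mul_mem_integralGL {n : Type*} [Fintype n] [LinearOrder n]
    (hϖ : Irreducible ϖ) (hπ : algebraMap R K ϖ = π) {a a' : n → ℤ} (ha : Monotone a)
    (ha' : Monotone a') {g : GL n K} (hg : g ∈ integralGL R n K)
    (h : (diagonalGL fun i => π ^ a' i)⁻¹ * g * (diagonalGL fun i => π ^ a i) ∈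
      integralGL R n K) : a' ≤ a := by
  intro i
  by_contra! hlt
  obtain ⟨g, rfl⟩ := hg
  have hdvd (j k : n) (hj : j ≤ i) (hk : i ≤ k) : ϖ ∣ g.val k j := by
    obtain ⟨r, hr⟩ := apply_mem_range_of_mem_integralGL h k j
    rw [diagonalGL_inv_mul_mul_diagonalGL_apply] at hr
    have hpos : 0 ≤ a' k - a j - 1 := by
      have := ha hj
      have := ha' hk
      lia
    obtain ⟨s, hs⟩ := exists_algebraMap_eq_zpow hπ hpos
    refine ⟨s * r, IsFractionRing.injective R K ?_⟩
    have hpow : π * π ^ (a' k - a j - 1) * ((π ^ a' k)⁻¹ * π ^ a j) = 1 := by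
      rw [← _root_.zpow_one_add, ← _root_.zpow_neg, ← _root_.zpow_add, ← _root_.zpow_add]
      simp
    calc algebraMap R K (g.val k j)
        = (π * π ^ (a' k - a j - 1) * ((π ^ a' k)⁻¹ * π ^ a j) : Kˣ) *
            algebraMap R K (g.val k j) := by rw [hpow, Units.val_one, one_mul]
      _ = algebraMap R K (ϖ * (s * r)) := by
          rw [map_mul, map_mul, hπ, hs, hr]
          push_cast
          simp only [GeneralLinearGroup.map_apply]
          ring
  have : Nontrivial (R ⧸ Ideal.span {ϖ}) :=
    Ideal.Quotient.nontrivial_iff.2 fun h => hϖ.not_isUnit (Ideal.span_singleton_eq_top.1 h)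
  have hdet : (GeneralLinearGroup.map (Ideal.Quotient.mk (Ideal.span {ϖ})) g).val.det = 0 :=
    det_eq_zero_of_forall_le i fun j k hj hk =>
      Ideal.Quotient.eq_zero_iff_mem.2 (Ideal.mem_span_singleton.2 (hdvd j k hj hk))
  exact (isUnits_det_units _).ne_zero hdet

variable {M N : ℕ} {lam₁ lam₂ : Fin M → ℤ} {th₁ th₂ : Fin (M + 1) → ℤ} {th₁' th₂' : Fin N → ℤ}

theorem le_of_cornerForm_inv_mul_mul_mem_integralGL (hϖ : Irreducible ϖ)
    (hπ : algebraMap R K ϖ = π) (hlam₁ : Monotone lam₁) (hlam₂ : Monotone lam₂)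
    (hth₁ : Monotone th₁) (hth₂ : Monotone th₂) {g : GL (Fin M) K} (hg : g ∈ integralGL R (Fin M) K)
    (h : (cornerForm π lam₂ th₂)⁻¹ * lowerBlock g 0 1 * cornerForm π lam₁ th₁ ∈
      integralGL R (Fin M ⊕ Fin 1) K) :
    lam₂ + th₂ ∘ Fin.castSucc ≤ lam₁ + th₁ ∘ Fin.castSucc ∧
      th₂ (Fin.last M) ≤ th₁ (Fin.last M) := by
  have hcast : Monotone (Fin.castSucc (n := M)) := Fin.strictMono_castSucc.monotone
  rw [cornerForm, cornerForm, lowerBlock_inv, lowerBlock_mul, lowerBlock_mul] at h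
  obtain ⟨hγ, hδ⟩ := blocks_mem_integralGL_of_lowerBlock h
  exact ⟨le_of_diagonalGL_inv_mul_mul_mem_integralGL hϖ hπ (hlam₁.add (hth₁.comp hcast))
      (hlam₂.add (hth₂.comp hcast)) hg hγ,
    le_of_diagonalGL_inv_mul_mul_mem_integralGL hϖ hπ monotone_const monotone_const (one_mem _)
      hδ 0⟩

theorem castSucc_le_of_cornerForm_inv_mul_mul_mem_integralGL (hϖ : Irreducible ϖ)
    (hπ : algebraMap R K ϖ = π) (hlam₂ : Monotone lam₂) (hth₂ : Monotone th₂)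
    (ha : lam₁ + th₁ ∘ Fin.castSucc = lam₂ + th₂ ∘ Fin.castSucc)
    {g : GL (Fin M) K} (hg : g ∈ integralGL R (Fin M) K)
    (h : (cornerForm π lam₂ th₂)⁻¹ * lowerBlock g 0 1 * cornerForm π lam₁ th₁ ∈
      integralGL R (Fin M ⊕ Fin 1) K) (j : Fin M) : th₂ j.castSucc ≤ th₁ j.castSucc := by
  have hD : (fun i => lam₁ i + th₁ i.castSucc) = fun i => lam₂ i + th₂ i.castSucc := ha
  set a := fun i => lam₂ i + th₂ i.castSucc with ha_def
  set γ := (diagonalGL fun i => π ^ a i)⁻¹ * g * diagonalGL fun i => π ^ a i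
  set G := (cornerForm π lam₂ th₂)⁻¹ * lowerBlock g 0 1 * cornerForm π lam₁ th₁ with hG_def
  obtain ⟨Y, δ, hG⟩ : ∃ Y δ, G = lowerBlock γ Y δ := by
    simp only [hG_def, cornerForm, lowerBlock_inv, lowerBlock_mul, congrFun hD]
    exact ⟨_, _, rfl⟩
  have hrow : ((π ^ th₁ j.castSucc : Kˣ) : K) =
      ∑ i : Fin M, ((π ^ th₂ i.castSucc : Kˣ) : K) * γ.val i j +
        (π ^ th₂ (Fin.last M) : Kˣ) * Y 0 j := by
    have hmul : cornerForm π lam₂ th₂ * G = lowerBlock g 0 1 * cornerForm π lam₁ th₁ := by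
      rw [hG_def]
      group
    have := congrArg (fun P => P.val (Sum.inr 0) (Sum.inl j)) hmul
    simpa [hG, cornerForm, mul_apply, one_apply] using this.symm
  rw [hG] at h
  have hY : Y 0 j ∈ (algebraMap R K).range :=
    apply_mem_range_of_mem_integralGL h (Sum.inr 0) (Sum.inl j)
  have hγ : γ ∈ integralGL R (Fin M) K := (blocks_mem_integralGL_of_lowerBlock h).1
  refine sub_nonneg.1 (nonneg_of_zpow_mem_range hϖ hπ ?_)
  have hsum : ((π ^ (th₁ j.castSucc - th₂ j.castSucc) : Kˣ) : K) =
      ∑ i : Fin M, ((π ^ (th₂ i.castSucc - th₂ j.castSucc) : Kˣ) : K) * γ.val i j +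
        (π ^ (th₂ (Fin.last M) - th₂ j.castSucc) : Kˣ) * Y 0 j := by
    simp only [_root_.zpow_sub, Units.val_mul, hrow, add_mul, Finset.sum_mul, mul_right_comm]
  rw [hsum]
  refine add_mem (sum_mem fun i _ => ?_)
    (mul_mem (exists_algebraMap_eq_zpow hπ (sub_nonneg.2 (hth₂ (Fin.le_last _)))) hY)
  exact zpow_sub_mul_diagonalGL_inv_mul_mul_apply_mem_range hπ (θ := th₂ ∘ Fin.castSucc)
    (hth₂.comp Fin.strictMono_castSucc.monotone) (by simpa [ha_def, Pi.sub_def] using hlam₂) hg hγ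
    i j

theorem exists_mem_integralGL_of_orbitSetoid_normalForm (hϖ : Irreducible ϖ)
    (hπ : algebraMap R K ϖ = π)
    (h : orbitSetoid R (Fin M) (Fin N) K (normalForm π lam₁ th₁ th₁')
      (normalForm π lam₂ th₂ th₂')) :
    th₂' ≤ th₁' ∧ ∃ g ∈ integralGL R (Fin M) K,
      (cornerForm π lam₂ th₂)⁻¹ * lowerBlock g 0 1 * cornerForm π lam₁ th₁ ∈
        integralGL R (Fin M ⊕ Fin 1) K := by
  obtain ⟨_, ⟨g, hg, X, u, hu, rfl⟩, C, hC, hL⟩ := DoubleCoset.rel_iff.1 h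
  have hCinv : (normalForm π lam₂ th₂ th₂')⁻¹ * lowerBlock (lowerBlock g 0 1) X u *
      normalForm π lam₁ th₁ th₁' = C⁻¹ := by
    rw [hL]
    group
  rw [normalForm, normalForm, lowerBlock_inv, lowerBlock_mul, lowerBlock_mul] at hCinv
  obtain ⟨hcorner, hdiag⟩ := blocks_mem_integralGL_of_lowerBlock (hCinv ▸ inv_mem hC)
  refine ⟨fun i => sub_nonneg.1 (nonneg_of_zpow_mem_range hϖ hπ ?_), g, hg, hcorner⟩
  have := apply_mem_range_of_mem_integralGL hdiag i i
  rwa [diagonalGL_inv_mul_mul_diagonalGL_apply, hu.2, mul_one, ← Units.val_mul, mul_comm,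
    ← _root_.zpow_sub] at this

theorem eq_of_orbitSetoid_normalForm (hϖ : Irreducible ϖ) (hπ : algebraMap R K ϖ = π)
    (hlam₁ : Monotone lam₁) (hlam₂ : Monotone lam₂) (hth₁ : Monotone th₁) (hth₂ : Monotone th₂)
    (h : orbitSetoid R (Fin M) (Fin N) K (normalForm π lam₁ th₁ th₁')
      (normalForm π lam₂ th₂ th₂')) :
    lam₁ = lam₂ ∧ th₁ = th₂ ∧ th₁' = th₂' := by
  obtain ⟨hle', g, hg, hG⟩ := exists_mem_integralGL_of_orbitSetoid_normalForm hϖ hπ h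
  obtain ⟨hge', k, hk, hH⟩ :=
    exists_mem_integralGL_of_orbitSetoid_normalForm hϖ hπ (Setoid.symm' _ h)
  obtain ⟨hale, hlastle⟩ :=
    le_of_cornerForm_inv_mul_mul_mem_integralGL hϖ hπ hlam₁ hlam₂ hth₁ hth₂ hg hG
  obtain ⟨hage, hlastge⟩ :=
    le_of_cornerForm_inv_mul_mul_mem_integralGL hϖ hπ hlam₂ hlam₁ hth₂ hth₁ hk hH
  have ha := hage.antisymm hale
  have hth : th₁ = th₂ := by
    ext i
    induction i using Fin.lastCases with
    | last => exact hlastge.antisymm hlastle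
    | cast j =>
      apply le_antisymm
      · exact castSucc_le_of_cornerForm_inv_mul_mul_mem_integralGL hϖ hπ hlam₁ hth₁ ha.symm hk hH j
      · exact castSucc_le_of_cornerForm_inv_mul_mul_mem_integralGL hϖ hπ hlam₂ hth₂ ha hg hG j
  subst hth
  exact ⟨add_right_cancel ha, rfl, hge'.antisymm hle'⟩

end Uniqueness

theorem stmt1_general {R K : Type*} [CommRing R] [IsDomain R] [IsDiscreteValuationRing R]
    [Field K] [Algebra R K] [IsFractionRing R K] {ϖ : R} {π : Kˣ} (hϖ : Irreducible ϖ)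
    (hπ : algebraMap R K ϖ = π) {M N : ℕ} (A : GL ((Fin M ⊕ Fin 1) ⊕ Fin N) K) :
    ∃! w : (Fin M → ℤ) × (Fin (M + 1) → ℤ) × (Fin N → ℤ), Monotone w.1 ∧ Monotone w.2.1 ∧
      orbitSetoid R (Fin M) (Fin N) K A (normalForm π w.1 w.2.1 w.2.2) := by
  obtain ⟨lam, th, th', hlam, hth, hA⟩ := exists_orbitSetoid_normalForm hϖ hπ A
  refine ⟨(lam, th, th'), ⟨hlam, hth, hA⟩, ?_⟩
  rintro ⟨lam₂, th₂, th₂'⟩ ⟨hlam₂, hth₂, hA₂⟩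
  obtain ⟨rfl, rfl, rfl⟩ := eq_of_orbitSetoid_normalForm hϖ hπ hlam₂ hlam hth₂ hth
    (Setoid.trans' _ (Setoid.symm' _ hA₂) hA)
  rfl

section LaurentSeries

open PowerSeries

/-- The uniformizer `t` of `ℂ((t))` as a unit. -/
def laurentT : Fˣ :=
  Units.mk0 (HahnSeries.single 1 1) (by simp)

theorem coe_laurentT_zpow (k : ℤ) : ((laurentT ^ k : Fˣ) : F) = tpow k := by
  rw [Units.val_zpow_eq_zpow_val]
  rfl

theorem algebraMap_X_eq_laurentT : algebraMap ℂ⟦X⟧ F X = laurentT := by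
  rw [LaurentSeries.coe_algebraMap, HahnSeries.ofPowerSeries_X]
  rfl

theorem mem_Oint_iff {f : F} : f ∈ Oint ↔ f ∈ (algebraMap ℂ⟦X⟧ F).range := by
  refine Iff.trans ?_ (LaurentSeries.val_le_one_iff_eq_coe ℂ f)
  simpa [Oint] using (LaurentSeries.valuation_le_iff_coeff_lt_eq_zero ℂ (D := 0) (f := f)).symm

theorem inGLO_iff {n : ℕ} {A : Matrix (Fin n) (Fin n) F} :
    InGLO A ↔ ∃ C ∈ integralGL ℂ⟦X⟧ (Fin n) F, C.val = A := by
  constructor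
  · rintro ⟨B, hA, hB, hAB, hBA⟩
    simp only [mem_Oint_iff, RingHom.mem_range] at hA hB
    choose A' hA' using hA
    choose B' hB' using hB
    exact ⟨⟨A, B, hAB, hBA⟩, mem_integralGL_of_map_eq (B := A') (B' := B') (ext hA') (ext hB'), rfl⟩
  · rintro ⟨C, hC, rfl⟩
    exact ⟨C⁻¹.val, fun i j => mem_Oint_iff.2 (apply_mem_range_of_mem_integralGL hC i j),
      fun i j => mem_Oint_iff.2 (apply_mem_range_of_mem_integralGL (inv_mem hC) i j),
      C.mul_inv, C.inv_mul⟩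

/-- The identification of the row indices of `Matrix.fromBlocks` with those of `LmatN`. -/
def blockEquiv (M K : ℕ) : (Fin M ⊕ Fin 1) ⊕ Fin K ≃ Fin (M + 1 + K) :=
  (finSumFinEquiv.sumCongr (Equiv.refl _)).trans finSumFinEquiv

theorem coe_blockEquiv_inl_inl {M K : ℕ} (i : Fin M) :
    (blockEquiv M K (Sum.inl (Sum.inl i)) : ℕ) = i :=
  rfl

theorem coe_blockEquiv_inl_inr {M K : ℕ} (i : Fin 1) :
    (blockEquiv M K (Sum.inl (Sum.inr i)) : ℕ) = M := by
  simp [blockEquiv]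

theorem coe_blockEquiv_inr {M K : ℕ} (i : Fin K) :
    (blockEquiv M K (Sum.inr i) : ℕ) = M + 1 + i :=
  rfl

theorem blockEquiv_inl_le {M K : ℕ} (i : Fin M ⊕ Fin 1) :
    (blockEquiv M K (Sum.inl i) : ℕ) ≤ M := by
  rcases i with i | i
  · exact i.isLt.le
  · exact (coe_blockEquiv_inl_inr i).le

theorem reindexGL_normalForm (M K : ℕ) (lam : Fin M → ℤ) (th : Fin (M + 1) → ℤ)
    (th' : Fin K → ℤ) :
    (reindexGL (blockEquiv M K) (normalForm laurentT lam th th')).val = LmatN M K lam th th' := by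
  have hcast (i : Fin M) (h : i.val < M + 1) : (⟨i.val, h⟩ : Fin (M + 1)) = i.castSucc := rfl
  have hlast (h : M < M + 1) : (⟨M, h⟩ : Fin (M + 1)) = Fin.last M := rfl
  refine Matrix.ext fun i j => ?_
  obtain ⟨i, rfl⟩ := (blockEquiv M K).surjective i
  obtain ⟨j, rfl⟩ := (blockEquiv M K).surjective j
  rw [coe_reindexGL, submatrix_apply, Equiv.symm_apply_apply, Equiv.symm_apply_apply]
  rcases i with (i | i) | i <;> rcases j with (j | j) | j <;>
    simp only [normalForm, cornerForm, LmatN, coe_lowerBlock, coe_diagonalGL, fromBlocks_apply₁₁,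
      fromBlocks_apply₁₂, fromBlocks_apply₂₁, fromBlocks_apply₂₂, replicateRow_apply,
      Matrix.zero_apply, diagonal_apply, coe_laurentT_zpow, coe_blockEquiv_inl_inl,
      coe_blockEquiv_inl_inr, coe_blockEquiv_inr, hcast, hlast] <;>
    grind

theorem reindexGL_lowerBlock_eq_embTop (M K : ℕ) (g : GL (Fin M) F) :
    (reindexGL (blockEquiv M K) (lowerBlock (lowerBlock g 0 1) 0 1)).val =
      embTop M (M + 1 + K) g.val := by
  refine Matrix.ext fun i j => ?_
  obtain ⟨i, rfl⟩ := (blockEquiv M K).surjective i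
  obtain ⟨j, rfl⟩ := (blockEquiv M K).surjective j
  rw [coe_reindexGL, submatrix_apply, Equiv.symm_apply_apply, Equiv.symm_apply_apply]
  rcases i with (i | i) | i <;> rcases j with (j | j) | j <;>
    simp only [embTop, coe_lowerBlock, Units.val_one, fromBlocks_apply₁₁, fromBlocks_apply₁₂,
      fromBlocks_apply₂₁, fromBlocks_apply₂₂, Matrix.zero_apply, one_apply,
      coe_blockEquiv_inl_inl, coe_blockEquiv_inl_inr, coe_blockEquiv_inr] <;>
    grind

theorem exists_reindexGL_lowerBlock_eq_of_inUminus {M K : ℕ}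
    {u : Matrix (Fin (M + 1 + K)) (Fin (M + 1 + K)) F} (hu : InUminus M u) :
    ∃ X, ∃ v ∈ lowerUnitriangular (Fin K) F,
      (reindexGL (blockEquiv M K) (lowerBlock 1 X v)).val = u := by
  obtain ⟨hu1, hu⟩ := hu
  have hv : (u.submatrix (blockEquiv M K) (blockEquiv M K)).toBlocks₂₂.IsLowerTriangular :=
    fun i j hij => by
      rw [OrderDual.toDual_lt_toDual] at hij
      exact hu _ _ (by simp [hij.ne]) (Or.inr (by simp [coe_blockEquiv_inr, hij.le]))
  have hdet : (u.submatrix (blockEquiv M K) (blockEquiv M K)).toBlocks₂₂.det = 1 := by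
    rw [det_of_isLowerTriangular _ hv]
    exact Finset.prod_eq_one fun i _ => hu1 _
  obtain ⟨v, hvu⟩ := (isUnit_iff_isUnit_det _).2 (hdet ▸ isUnit_one)
  refine ⟨(u.submatrix (blockEquiv M K) (blockEquiv M K)).toBlocks₂₁, v,
    ⟨hvu ▸ hv, fun i => hvu ▸ hu1 _⟩, Matrix.ext fun i j => ?_⟩
  obtain ⟨i, rfl⟩ := (blockEquiv M K).surjective i
  obtain ⟨j, rfl⟩ := (blockEquiv M K).surjective j
  rcases i with i | i
  · rcases eq_or_ne (Sum.inl i) j with rfl | hij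
    · simp [hu1]
    · rw [hu _ _ ((blockEquiv M K).injective.ne hij) (Or.inl (blockEquiv_inl_le i))]
      rcases j with j | j
      · simp [one_apply, Sum.inl_injective.ne_iff.1 hij]
      · simp
  · rcases j with j | j <;> simp [hvu, toBlocks₂₁, toBlocks₂₂]

theorem inUminus_reindexGL_lowerBlock {M K : ℕ} (X : Matrix (Fin K) (Fin M ⊕ Fin 1) F)
    {v : GL (Fin K) F} (hv : v ∈ lowerUnitriangular (Fin K) F) :
    InUminus M (reindexGL (blockEquiv M K) (lowerBlock 1 X v)).val := by
  refine ⟨fun i => ?_, fun i j hij hle => ?_⟩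
  · obtain ⟨i, rfl⟩ := (blockEquiv M K).surjective i
    rcases i with i | i <;> simp [hv.2]
  · obtain ⟨i, rfl⟩ := (blockEquiv M K).surjective i
    obtain ⟨j, rfl⟩ := (blockEquiv M K).surjective j
    rw [(blockEquiv M K).injective.ne_iff] at hij
    rcases i with i | i <;> rcases j with j | j
    · simp [one_apply, Sum.inl_injective.ne_iff.1 hij]
    · simp
    · have := blockEquiv_inl_le (K := K) j
      rw [coe_blockEquiv_inr] at hle
      lia
    · rw [Sum.inr_injective.ne_iff] at hij
      rw [coe_blockEquiv_inr, coe_blockEquiv_inr] at hle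
      have hlt : i < j := by lia
      simpa using hv.1 (OrderDual.toDual_lt_toDual.2 hlt)

theorem exists_embTop_mul_eq_LmatN_iff {M K : ℕ} {A : GL ((Fin M ⊕ Fin 1) ⊕ Fin K) F}
    {lam : Fin M → ℤ} {th : Fin (M + 1) → ℤ} {th' : Fin K → ℤ} :
    (∃ (g : Matrix (Fin M) (Fin M) F) (u C : Matrix (Fin (M + 1 + K)) (Fin (M + 1 + K)) F),
      InGLO g ∧ InUminus M u ∧ InGLO C ∧
        embTop M (M + 1 + K) g * u * (reindexGL (blockEquiv M K) A).val * C =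
          LmatN M K lam th th') ↔
      orbitSetoid ℂ⟦X⟧ (Fin M) (Fin K) F A (normalForm laurentT lam th th') := by
  have hsplit (g : GL (Fin M) F) (X : Matrix (Fin K) (Fin M ⊕ Fin 1) F) (v : GL (Fin K) F) :
      lowerBlock (lowerBlock g 0 1) X v = lowerBlock (lowerBlock g 0 1) 0 1 * lowerBlock 1 X v := by
    simp [lowerBlock_mul]
  rw [DoubleCoset.rel_iff]
  constructor
  · rintro ⟨_, _, _, hg, hu, hC, h⟩
    obtain ⟨g, hg', rfl⟩ := inGLO_iff.1 hg
    obtain ⟨X, v, hv, rfl⟩ := exists_reindexGL_lowerBlock_eq_of_inUminus hu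
    obtain ⟨C, hC', rfl⟩ := inGLO_iff.1 hC
    refine ⟨_, ⟨g, hg', X, v, hv, rfl⟩, (reindexGL (blockEquiv M K)).symm C,
      reindexGL_mem_integralGL (blockEquiv M K).symm hC', ?_⟩
    apply (reindexGL (blockEquiv M K)).injective
    rw [hsplit, map_mul, map_mul, map_mul, MulEquiv.apply_symm_apply]
    rw [← reindexGL_lowerBlock_eq_embTop, ← reindexGL_normalForm] at h
    exact Units.ext h.symm
  · rintro ⟨_, ⟨g, hg, X, v, hv, rfl⟩, C, hC, h⟩
    refine ⟨g.val, _, (reindexGL (blockEquiv M K) C).val, inGLO_iff.2 ⟨g, hg, rfl⟩,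
      inUminus_reindexGL_lowerBlock X hv, inGLO_iff.2 ⟨_, reindexGL_mem_integralGL _ hC, rfl⟩, ?_⟩
    rw [← reindexGL_lowerBlock_eq_embTop, ← reindexGL_normalForm, h, hsplit g X v, map_mul,
      map_mul, map_mul, Units.val_mul, Units.val_mul, Units.val_mul]

end LaurentSeries

/-- Every `GL_M(O) ⋉ U⁻_{M,N}(F)`-orbit on `Gr_N = GL_N(F)/GL_N(O)`
(`N = M+1+K`, `M < N`) contains a representative of the form `L_{(λ,(θ,θ'))}` with `(λ,θ)`
a dominant weight of length `(M,M+1)` and `θ'` an arbitrary integer sequence of length `K`;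
moreover this representative is unique. -/
theorem stmt1 (M K : ℕ) (A : Matrix (Fin (M + 1 + K)) (Fin (M + 1 + K)) F)
    (hA : IsUnit A.det) :
    ∃! w : (Fin M → ℤ) × (Fin (M + 1) → ℤ) × (Fin K → ℤ),
      Monotone w.1 ∧ Monotone w.2.1 ∧
      ∃ (g : Matrix (Fin M) (Fin M) F)
        (u C : Matrix (Fin (M + 1 + K)) (Fin (M + 1 + K)) F),
        InGLO g ∧ InUminus M u ∧ InGLO C ∧
          embTop M (M + 1 + K) g * u * A * C = LmatN M K w.1 w.2.1 w.2.2 := by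
  obtain ⟨B, hB⟩ := (reindexGL (blockEquiv M K)).surjective (GeneralLinearGroup.mk'' A hA)
  obtain rfl : (reindexGL (blockEquiv M K) B).val = A := congrArg Units.val hB
  simpa only [exists_embTop_mul_eq_LmatN_iff] using
    stmt1_general PowerSeries.X_irreducible algebraMap_X_eq_laurentT B
end
end
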